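/- Let 0 < a < 1, let n ≥ 2 be an integer, and let s > a/4. Then there exists a constant C > 0, independent of f, such that for every radial function f ∈ C_c^∞(ℝⁿ \ {0}) one has ‖S^a f‖_{L²(Bⁿ, L^∞(B))} ≤ C ‖f‖_{H^s(ℝⁿ)}. -/

import Mathlib

open MeasureTheory Real
open scoped InnerProductSpace

noncomputable section

/-- The Fourier transform `f̂(ξ) = ∫ e^{-i x·ξ} f(x) dx` on `ℝⁿ`. -/
def FT (n : ℕ) (f : EuclideanSpace ℝ (Fin n) → ℂ) (ξ : EuclideanSpace ℝ (Fin n)) : ℂ :=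
  ∫ x, Complex.exp (-(Complex.I * ((⟪x, ξ⟫_ℝ : ℝ) : ℂ))) * f x

/-- The oscillatory integral `S^a f(x,t) = (2π)^{-n} ∫ e^{i(x·ξ + t|ξ|^a)} f̂(ξ) dξ`. -/
def Sosc (n : ℕ) (a : ℝ) (f : EuclideanSpace ℝ (Fin n) → ℂ)
    (x : EuclideanSpace ℝ (Fin n)) (t : ℝ) : ℂ :=
  (((2 * π) ^ n : ℝ) : ℂ)⁻¹ *
    ∫ ξ, Complex.exp (Complex.I * ((⟪x, ξ⟫_ℝ + t * ‖ξ‖ ^ a : ℝ) : ℂ)) * FT n f ξ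

/-!
For radial `f` the Fourier inversion integral in polar coordinates turns `S^a f` into
one-dimensional integrals with phase `± r ρ + t ρ ^ a`, up to an error of relative size
`min (1, 1 / (r ρ))`: the cosine integral over the sphere, multiplied by `z ^ ((n - 1) / 2)`, solves
`w'' = κ w / z ^ 2 - w`, so it is asymptotic to a combination of `e^{iz}` and `e^{-iz}`, and the
power of `z` is exactly what absorbs the Jacobians. Linearizing the supremum by a measurable choice
`t = τ(r)`, the main part on a frequency block `ρ ∈ [N, 2N]` is estimated by `TT*`. Its kernel in
`(r, r')` is an oscillatory integral with phase `(r - r') ρ + (τ(r) - τ(r')) ρ ^ a`; since `a < 1`,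
van der Corput's lemma bounds it by `C N ^ (a / 2 + ε) |r - r'| ^ (ε - 1)` uniformly in `τ`.
Schur's test then loses `N ^ (a / 4 + ε / 2)`, and the blocks are summed because `s > a / 4`.
-/

open scoped ENNReal ComplexConjugate

/-! ### Van der Corput estimates -/

section VanDerCorput

open Set

variable {p q : ℝ} {φ φ' φ'' ψ ψ' : ℝ → ℝ}

-- Integrate `(ψ e^{iφ})'`.
lemma I_mul_integral_exp_eq (hpq : p ≤ q)
    (hφ : ∀ x ∈ Icc p q, HasDerivAt φ (φ' x) x) (hψ : ∀ x ∈ Icc p q, HasDerivAt ψ (ψ' x) x)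
    (hφ' : ContinuousOn φ' (Icc p q)) (hψ' : ContinuousOn ψ' (Icc p q)) :
    Complex.I * ∫ x in p..q, Complex.exp (Complex.I * (φ x : ℂ)) =
      (ψ q * Complex.exp (Complex.I * (φ q : ℂ)) - ψ p * Complex.exp (Complex.I * (φ p : ℂ))) +
        ∫ x in p..q, (Complex.I * (1 - ψ x * φ' x : ℝ) - (ψ' x : ℝ)) *
          Complex.exp (Complex.I * (φ x : ℂ)) := by
  rw [← uIcc_of_le hpq] at hφ hψ hφ' hψ'
  have hexp : ContinuousOn (fun x ↦ Complex.exp (Complex.I * (φ x : ℂ))) (uIcc p q) :=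
    fun x hx ↦ ((hφ x hx).ofReal_comp.const_mul Complex.I).cexp.continuousAt.continuousWithinAt
  have hψc : ContinuousOn (fun x ↦ (ψ x : ℂ)) (uIcc p q) :=
    fun x hx ↦ (hψ x hx).ofReal_comp.continuousAt.continuousWithinAt
  have hφ'c : ContinuousOn (fun x ↦ (φ' x : ℂ)) (uIcc p q) :=
    Complex.continuous_ofReal.comp_continuousOn hφ'
  have hψ'c : ContinuousOn (fun x ↦ (ψ' x : ℂ)) (uIcc p q) :=
    Complex.continuous_ofReal.comp_continuousOn hψ'
  have hderiv : ∀ x ∈ uIcc p q, HasDerivAt (fun x ↦ (ψ x : ℂ) * Complex.exp (Complex.I * φ x))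
      (ψ' x * Complex.exp (Complex.I * φ x) +
        ψ x * (Complex.exp (Complex.I * φ x) * (Complex.I * φ' x))) x := fun x hx ↦
    (hψ x hx).ofReal_comp.mul ((hφ x hx).ofReal_comp.const_mul Complex.I).cexp
  have hint : IntervalIntegrable (fun x ↦ (ψ' x : ℂ) * Complex.exp (Complex.I * φ x) +
      ψ x * (Complex.exp (Complex.I * φ x) * (Complex.I * φ' x))) volume p q :=
    ContinuousOn.intervalIntegrable (by fun_prop)
  rw [← intervalIntegral.integral_eq_sub_of_hasDerivAt hderiv hint,
    ← intervalIntegral.integral_add hint, ← intervalIntegral.integral_const_mul]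
  · congr 1
    ext x
    push_cast
    ring
  · simp only [Complex.ofReal_sub, Complex.ofReal_one, Complex.ofReal_mul]
    exact ContinuousOn.intervalIntegrable (by fun_prop)

lemma norm_integral_exp_le_of_multiplier (hpq : p ≤ q)
    (hφ : ∀ x ∈ Icc p q, HasDerivAt φ (φ' x) x) (hψ : ∀ x ∈ Icc p q, HasDerivAt ψ (ψ' x) x)
    (hφ' : ContinuousOn φ' (Icc p q)) (hψ' : ContinuousOn ψ' (Icc p q)) :
    ‖∫ x in p..q, Complex.exp (Complex.I * (φ x : ℂ))‖ ≤
      |ψ q| + |ψ p| + ∫ x in p..q, (|ψ' x| + |1 - ψ x * φ' x|) := by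
  have hψc : ContinuousOn ψ (Icc p q) := fun x hx ↦ (hψ x hx).continuousAt.continuousWithinAt
  calc ‖∫ x in p..q, Complex.exp (Complex.I * (φ x : ℂ))‖
      = ‖Complex.I * ∫ x in p..q, Complex.exp (Complex.I * (φ x : ℂ))‖ := by
        rw [norm_mul, Complex.norm_I, one_mul]
    _ ≤ _ := by
        rw [I_mul_integral_exp_eq hpq hφ hψ hφ' hψ']
        refine (norm_add_le _ _).trans (add_le_add ?_ ?_)
        · refine (norm_sub_le _ _).trans_eq ?_
          simp only [norm_mul, Complex.norm_exp_I_mul_ofReal, mul_one, Complex.norm_real,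
            norm_eq_abs]
        · refine intervalIntegral.norm_integral_le_of_norm_le hpq (.of_forall fun x _ ↦ ?_) ?_
          · rw [norm_mul, Complex.norm_exp_I_mul_ofReal, mul_one, add_comm]
            refine (norm_sub_le _ _).trans_eq ?_
            rw [norm_mul, Complex.norm_I, one_mul, Complex.norm_real, Complex.norm_real,
              norm_eq_abs, norm_eq_abs]
          · rw [← uIcc_of_le hpq] at hφ' hψ' hψc
            exact (hψ'.abs.add (continuousOn_const.sub (hψc.mul hφ')).abs).intervalIntegrable

lemma norm_integral_exp_le_of_le_abs_deriv (hpq : p ≤ q) {l L : ℝ}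
    (hφ : ∀ x ∈ Icc p q, HasDerivAt φ (φ' x) x) (hφ' : ∀ x ∈ Icc p q, HasDerivAt φ' (φ'' x) x)
    (hφ'' : ContinuousOn φ'' (Icc p q)) (hl : 0 < l)
    (hlφ' : ∀ x ∈ Icc p q, l ≤ |φ' x|) (hLφ'' : ∀ x ∈ Icc p q, |φ'' x| ≤ L) :
    ‖∫ x in p..q, Complex.exp (Complex.I * (φ x : ℂ))‖ ≤ 2 / l + L / l ^ 2 * (q - p) := by
  have hφ'c : ContinuousOn φ' (Icc p q) := fun x hx ↦ (hφ' x hx).continuousAt.continuousWithinAt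
  have hne : ∀ x ∈ Icc p q, φ' x ≠ 0 := fun x hx ↦ abs_pos.1 (hl.trans_le (hlφ' x hx))
  have hparts := norm_integral_exp_le_of_multiplier hpq hφ
    (fun x hx ↦ (hφ' x hx).fun_inv (hne x hx)) hφ'c
    (hφ''.neg.div (hφ'c.pow 2) fun x hx ↦ pow_ne_zero 2 (hne x hx))
  have hboundary : ∀ x ∈ Icc p q, |(φ' x)⁻¹| ≤ 1 / l := fun x hx ↦ by
    rw [abs_inv, one_div]
    exact inv_anti₀ hl (hlφ' x hx)
  have hintegrand : ∀ x ∈ uIoc p q,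
      ‖|-φ'' x / φ' x ^ 2| + |1 - (φ' x)⁻¹ * φ' x|‖ ≤ L / l ^ 2 := by
    intro x hx
    rw [uIoc_of_le hpq] at hx
    have hx := Ioc_subset_Icc_self hx
    rw [inv_mul_cancel₀ (hne x hx), sub_self, abs_zero, add_zero, norm_eq_abs, abs_abs, abs_div,
      abs_neg, abs_pow]
    exact div_le_div₀ ((abs_nonneg _).trans (hLφ'' x hx)) (hLφ'' x hx) (pow_pos hl 2)
      (pow_le_pow_left₀ hl.le (hlφ' x hx) 2)
  have hintegral := (le_abs_self _).trans
    (intervalIntegral.norm_integral_le_of_norm_le_const hintegrand)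
  rw [abs_of_nonneg (sub_nonneg.2 hpq)] at hintegral
  calc _ ≤ _ := hparts
    _ ≤ 1 / l + 1 / l + L / l ^ 2 * (q - p) :=
      add_le_add (add_le_add (hboundary q ⟨hpq, le_rfl⟩) (hboundary p ⟨le_rfl, hpq⟩)) hintegral
    _ = _ := by ring

lemma integral_deriv_div_sq_add_sq_le {g g' : ℝ → ℝ} {r : ℝ} (hr : 0 < r) (hpq : p ≤ q)
    (hg : ∀ x ∈ Icc p q, HasDerivAt g (g' x) x) (hg' : ContinuousOn g' (Icc p q)) :
    ∫ x in p..q, g' x / (g x ^ 2 + r ^ 2) ≤ π / r := by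
  rw [← uIcc_of_le hpq] at hg hg'
  have hgc : ContinuousOn g (uIcc p q) := fun x hx ↦ (hg x hx).continuousAt.continuousWithinAt
  have hderiv : ∀ x ∈ uIcc p q,
      HasDerivAt (fun x ↦ 1 / r * arctan (g x / r)) (g' x / (g x ^ 2 + r ^ 2)) x := fun x hx ↦ by
    refine (((hg x hx).div_const r).arctan.const_mul (1 / r)).congr_deriv ?_
    have : 0 < g x ^ 2 + r ^ 2 := by positivity
    field_simp
    ring
  have hint : IntervalIntegrable (fun x ↦ g' x / (g x ^ 2 + r ^ 2)) volume p q :=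
    (hg'.div ((hgc.pow 2).add continuousOn_const)
      fun x _ ↦ (add_pos_of_nonneg_of_pos (sq_nonneg _) (pow_pos hr 2)).ne').intervalIntegrable
  rw [intervalIntegral.integral_eq_sub_of_hasDerivAt hderiv hint, ← mul_sub, one_div_mul_eq_div]
  gcongr
  linarith [arctan_lt_pi_div_two (g q / r), neg_pi_div_two_lt_arctan (g p / r)]

lemma abs_div_sq_add_sq_le {r : ℝ} (hr : 0 < r) (y : ℝ) :
    |y / (y ^ 2 + r ^ 2)| ≤ 1 / (2 * r) := by
  have hpos : 0 < y ^ 2 + r ^ 2 := by positivity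
  rw [abs_div, abs_of_pos hpos, div_le_div_iff₀ hpos (by positivity), ← sq_abs y]
  nlinarith [sq_nonneg (|y| - r)]

lemma abs_deriv_div_sq_add_sq_add_abs_le {r c : ℝ} (hr : 0 < r) (hrc : r ^ 2 ≤ c) (y : ℝ) :
    |c * (r ^ 2 - y ^ 2) / (y ^ 2 + r ^ 2) ^ 2| + |1 - y / (y ^ 2 + r ^ 2) * y| ≤
      2 * (c / (y ^ 2 + r ^ 2)) := by
  have hr2 : 0 < r ^ 2 := pow_pos hr 2
  have hpos : 0 < y ^ 2 + r ^ 2 := by positivity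
  have hderiv : |c * (r ^ 2 - y ^ 2) / (y ^ 2 + r ^ 2) ^ 2| ≤ c / (y ^ 2 + r ^ 2) := by
    have : |r ^ 2 - y ^ 2| ≤ y ^ 2 + r ^ 2 :=
      abs_le.2 ⟨by linarith, by linarith [sq_nonneg y]⟩
    rw [abs_div, abs_mul, abs_of_pos (hr2.trans_le hrc), abs_of_pos (pow_pos hpos 2),
      div_le_div_iff₀ (pow_pos hpos 2) hpos, sq (y ^ 2 + r ^ 2), ← mul_assoc]
    have := hr2.le.trans hrc
    gcongr
  have hdefect : |1 - y / (y ^ 2 + r ^ 2) * y| ≤ c / (y ^ 2 + r ^ 2) := by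
    have : 1 - y / (y ^ 2 + r ^ 2) * y = r ^ 2 / (y ^ 2 + r ^ 2) := by
      field_simp
      ring
    rw [this, abs_of_pos (div_pos hr2 hpos)]
    gcongr
  linarith

-- The multiplier `φ' / (φ'² + m)` replaces the usual splitting of the interval at the zero of `φ'`.
lemma norm_integral_exp_le_of_le_second_deriv (hpq : p ≤ q) {m : ℝ}
    (hφ : ∀ x ∈ Icc p q, HasDerivAt φ (φ' x) x) (hφ' : ∀ x ∈ Icc p q, HasDerivAt φ' (φ'' x) x)
    (hφ'' : ContinuousOn φ'' (Icc p q)) (hm : 0 < m) (hmφ'' : ∀ x ∈ Icc p q, m ≤ φ'' x) :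
    ‖∫ x in p..q, Complex.exp (Complex.I * (φ x : ℂ))‖ ≤ 8 / √m := by
  obtain ⟨r, hr, rfl⟩ : ∃ r, 0 < r ∧ r ^ 2 = m := ⟨√m, sqrt_pos.2 hm, sq_sqrt hm.le⟩
  rw [sqrt_sq hr.le]
  have hφ'c : ContinuousOn φ' (Icc p q) := fun x hx ↦ (hφ' x hx).continuousAt.continuousWithinAt
  have hpos : ∀ x, 0 < φ' x ^ 2 + r ^ 2 := fun x ↦ by positivity
  have hdenom : ContinuousOn (fun x ↦ φ' x ^ 2 + r ^ 2) (Icc p q) :=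
    (hφ'c.pow 2).add continuousOn_const
  have hψ : ∀ x ∈ Icc p q, HasDerivAt (fun x ↦ φ' x / (φ' x ^ 2 + r ^ 2))
      (φ'' x * (r ^ 2 - φ' x ^ 2) / (φ' x ^ 2 + r ^ 2) ^ 2) x := fun x hx ↦ by
    refine ((hφ' x hx).fun_div (((hφ' x hx).fun_pow 2).add_const _) (hpos x).ne').congr_deriv ?_
    congr 1
    push_cast
    ring
  have hψ' : ContinuousOn (fun x ↦ φ'' x * (r ^ 2 - φ' x ^ 2) / (φ' x ^ 2 + r ^ 2) ^ 2)
      (Icc p q) :=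
    (hφ''.mul (continuousOn_const.sub (hφ'c.pow 2))).div (hdenom.pow 2)
      fun x _ ↦ pow_ne_zero 2 (hpos x).ne'
  have hintegral : ∫ x in p..q, (|φ'' x * (r ^ 2 - φ' x ^ 2) / (φ' x ^ 2 + r ^ 2) ^ 2| +
      |1 - φ' x / (φ' x ^ 2 + r ^ 2) * φ' x|) ≤ 2 * (π / r) := by
    calc _ ≤ ∫ x in p..q, 2 * (φ'' x / (φ' x ^ 2 + r ^ 2)) := by
          refine intervalIntegral.integral_mono_on hpq ?_ ?_ fun x hx ↦
              abs_deriv_div_sq_add_sq_add_abs_le hr (hmφ'' x hx) (φ' x) <;>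
            refine ContinuousOn.intervalIntegrable_of_Icc hpq ?_
          · exact hψ'.abs.add (continuousOn_const.sub
              ((hφ'c.div hdenom fun x _ ↦ (hpos x).ne').mul hφ'c)).abs
          · exact continuousOn_const.mul (hφ''.div hdenom fun x _ ↦ (hpos x).ne')
      _ ≤ _ := by
          rw [intervalIntegral.integral_const_mul]
          gcongr
          exact integral_deriv_div_sq_add_sq_le hr hpq hφ' hφ''
  calc _ ≤ _ := norm_integral_exp_le_of_multiplier hpq hφ hψ hφ'c hψ'
    _ ≤ 1 / (2 * r) + 1 / (2 * r) + 2 * (π / r) :=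
      add_le_add (add_le_add (abs_div_sq_add_sq_le hr _) (abs_div_sq_add_sq_le hr _)) hintegral
    _ = (1 + 2 * π) / r := by field_simp; ring
    _ ≤ 8 / r := by
      gcongr
      linarith [pi_lt_d2]

lemma norm_integral_exp_neg (p q : ℝ) (φ : ℝ → ℝ) :
    ‖∫ x in p..q, Complex.exp (Complex.I * ((-φ x : ℝ) : ℂ))‖ =
      ‖∫ x in p..q, Complex.exp (Complex.I * (φ x : ℂ))‖ := by
  rw [← Complex.norm_conj (∫ x in p..q, Complex.exp (Complex.I * (φ x : ℂ))),
    ← intervalIntegral.intervalIntegral_conj]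
  simp only [← Complex.exp_conj, map_mul, Complex.conj_I, Complex.conj_ofReal, Complex.ofReal_neg,
    mul_neg, neg_mul]

end VanDerCorput

/-! ### The dyadic kernel -/

section DyadicKernel

open Set

variable {a x t N : ℝ}

lemma hasDerivAt_phase (a x t : ℝ) {ρ : ℝ} (hρ : 0 < ρ) :
    HasDerivAt (fun ρ ↦ x * ρ + t * ρ ^ a) (x + t * (a * ρ ^ (a - 1))) ρ := by
  simpa only [id_eq, mul_one] using ((hasDerivAt_id ρ).const_mul x).fun_add
    ((hasDerivAt_rpow_const (p := a) (.inl hρ.ne')).const_mul t)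

lemma hasDerivAt_deriv_phase (a x t : ℝ) {ρ : ℝ} (hρ : 0 < ρ) :
    HasDerivAt (fun ρ ↦ x + t * (a * ρ ^ (a - 1))) (t * (a * ((a - 1) * ρ ^ (a - 2)))) ρ := by
  have h := (((hasDerivAt_rpow_const (p := a - 1) (.inl hρ.ne')).const_mul a).const_mul
    t).const_add x
  rwa [sub_sub, one_add_one_eq_two] at h

lemma continuousOn_second_deriv_phase (a t : ℝ) (hN : 0 < N) :
    ContinuousOn (fun ρ ↦ t * (a * ((a - 1) * ρ ^ (a - 2)))) (Icc N (2 * N)) := fun _ hρ ↦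
  ((((continuousAt_rpow_const _ _ (.inl (hN.trans_le hρ.1).ne')).const_mul _).const_mul _).const_mul
    _).continuousWithinAt

lemma norm_integral_phase_le (a x t : ℝ) (hN : 0 < N) :
    ‖∫ ρ in N..(2 * N), Complex.exp (Complex.I * ((x * ρ + t * ρ ^ a : ℝ) : ℂ))‖ ≤ N := by
  have h := intervalIntegral.norm_integral_le_of_norm_le_const (a := N) (b := 2 * N)
    fun ρ _ ↦ (Complex.norm_exp_I_mul_ofReal (x * ρ + t * ρ ^ a)).le
  rwa [two_mul, add_sub_cancel_right, one_mul, abs_of_pos hN, ← two_mul] at h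

lemma norm_integral_phase_le_div_abs (ha : 0 < a) (ha1 : a < 1) (hN : 0 < N) (hx : x ≠ 0)
    (hxt : 2 * (|t| * N ^ (a - 1)) ≤ |x|) :
    ‖∫ ρ in N..(2 * N), Complex.exp (Complex.I * ((x * ρ + t * ρ ^ a : ℝ) : ℂ))‖ ≤ 6 / |x| := by
  have : 0 < |x| := abs_pos.2 hx
  have hdecay : ∀ ρ ∈ Icc N (2 * N), ∀ b ≤ (0 : ℝ), ρ ^ b ≤ N ^ b := fun ρ hρ b hb ↦
    rpow_le_rpow_of_nonpos hN hρ.1 hb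
  have hderiv : ∀ ρ ∈ Icc N (2 * N), |x| / 2 ≤ |x + t * (a * ρ ^ (a - 1))| := fun ρ hρ ↦ by
    have hpos : 0 < ρ ^ (a - 1) := rpow_pos_of_pos (hN.trans_le hρ.1) _
    have hpert : |t * (a * ρ ^ (a - 1))| ≤ |t| * (1 * N ^ (a - 1)) := by
      have := hdecay ρ hρ (a - 1) (by linarith)
      rw [abs_mul, abs_of_pos (mul_pos ha hpos)]
      gcongr
    have := abs_sub_abs_le_abs_add x (t * (a * ρ ^ (a - 1)))
    linarith
  have hderiv2 : ∀ ρ ∈ Icc N (2 * N), |t * (a * ((a - 1) * ρ ^ (a - 2)))| ≤ |x| / (2 * N) :=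
    fun ρ hρ ↦ by
      have hpos : 0 < ρ ^ (a - 2) := rpow_pos_of_pos (hN.trans_le hρ.1) _
      calc |t * (a * ((a - 1) * ρ ^ (a - 2)))| = |t| * (a * ((1 - a) * ρ ^ (a - 2))) := by
            rw [abs_mul, abs_mul, abs_mul, abs_of_pos ha, abs_of_pos hpos,
              abs_of_neg (by linarith : a - 1 < 0), neg_sub]
        _ ≤ |t| * (1 * (1 * N ^ (a - 2))) := by
            have : 0 ≤ 1 - a := by linarith
            have : 1 - a ≤ 1 := by linarith
            have := hdecay ρ hρ (a - 2) (by linarith)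
            gcongr
        _ = 2 * (|t| * N ^ (a - 1)) / (2 * N) := by
            rw [show a - 2 = a - 1 - 1 by ring, rpow_sub_one hN.ne' (a - 1)]
            field_simp
        _ ≤ |x| / (2 * N) := by gcongr
  refine (norm_integral_exp_le_of_le_abs_deriv (by linarith)
    (fun ρ hρ ↦ hasDerivAt_phase a x t (hN.trans_le hρ.1))
    (fun ρ hρ ↦ hasDerivAt_deriv_phase a x t (hN.trans_le hρ.1))
    (continuousOn_second_deriv_phase a t hN) (by positivity) hderiv hderiv2).trans_eq ?_
  field_simp
  ring

lemma norm_integral_phase_le_div_sqrt (ha : 0 < a) (ha1 : a < 1) (hN : 0 < N) (hx : x ≠ 0)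
    (hxt : |x| < 2 * (|t| * N ^ (a - 1))) :
    ‖∫ ρ in N..(2 * N), Complex.exp (Complex.I * ((x * ρ + t * ρ ^ a : ℝ) : ℂ))‖ ≤
      8 / √(a * (1 - a) / 8 * (|x| / N)) := by
  have : 0 < 1 - a := by linarith
  wlog ht : t ≤ 0 generalizing x t
  · rw [← norm_integral_exp_neg]
    simpa only [neg_add, neg_mul, abs_neg] using this (x := -x) (t := -t) (neg_ne_zero.2 hx)
      (by simpa only [abs_neg] using hxt) (by linarith)
  rw [abs_of_nonpos ht] at hxt
  have : 0 < |x| := abs_pos.2 hx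
  have hN2 : (4 : ℝ)⁻¹ * N ^ (a - 2) ≤ (2 * N) ^ (a - 2) := by
    rw [mul_rpow zero_le_two hN.le]
    gcongr
    calc (4 : ℝ)⁻¹ = 2 ^ (-2 : ℝ) := by rw [rpow_neg zero_le_two]; norm_num
      _ ≤ 2 ^ (a - 2) := rpow_le_rpow_of_exponent_le one_le_two (by linarith)
  refine norm_integral_exp_le_of_le_second_deriv (by linarith)
    (fun ρ hρ ↦ hasDerivAt_phase a x t (hN.trans_le hρ.1))
    (fun ρ hρ ↦ hasDerivAt_deriv_phase a x t (hN.trans_le hρ.1))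
    (continuousOn_second_deriv_phase a t hN) (by positivity) fun ρ hρ ↦ ?_
  calc a * (1 - a) / 8 * (|x| / N)
      ≤ a * (1 - a) / 8 * (2 * (-t * N ^ (a - 1)) / N) := by gcongr
    _ = a * (1 - a) * (-t) * ((4 : ℝ)⁻¹ * N ^ (a - 2)) := by
        rw [show a - 2 = a - 1 - 1 by ring, rpow_sub_one hN.ne' (a - 1)]
        ring
    _ ≤ a * (1 - a) * (-t) * ρ ^ (a - 2) := by
        have : 0 ≤ -t := by linarith
        gcongr
        exact hN2.trans (rpow_le_rpow_of_nonpos (hN.trans_le hρ.1) hρ.2 (by linarith))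
    _ = t * (a * ((a - 1) * ρ ^ (a - 2))) := by ring

lemma min_le_rpow_mul_rpow {u v θ : ℝ} (hu : 0 < u) (hv : 0 < v) (hθ0 : 0 ≤ θ) (hθ1 : θ ≤ 1) :
    min u v ≤ u ^ θ * v ^ (1 - θ) := by
  have hm : 0 < min u v := lt_min hu hv
  calc min u v = min u v ^ θ * min u v ^ (1 - θ) := by rw [← rpow_add hm, add_sub_cancel, rpow_one]
    _ ≤ u ^ θ * v ^ (1 - θ) := by
      have : 0 ≤ 1 - θ := by linarith
      gcongr
      exacts [min_le_left u v, min_le_right u v]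

lemma sqrt_div_abs_le_rpow {ε : ℝ} (ha : 0 < a) (hε0 : 0 ≤ ε) (hε : ε ≤ 1 / 2) (hN : 1 ≤ N)
    (hx : x ≠ 0) (hxN : |x| ≤ 4 * N ^ (a - 1)) :
    √(N / |x|) ≤ 2 * N ^ (a / 2 + ε) * |x| ^ (ε - 1) := by
  have hN0 : 0 < N := by linarith
  have hx0 : 0 < |x| := abs_pos.2 hx
  have hfour : (4 : ℝ) ^ (1 / 2 - ε) ≤ 2 := by
    calc (4 : ℝ) ^ (1 / 2 - ε) ≤ 4 ^ (1 / 2 : ℝ) :=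
          rpow_le_rpow_of_exponent_le (by norm_num) (by linarith)
      _ = 2 := by
          rw [← sqrt_eq_rpow, show (4 : ℝ) = 2 ^ 2 by norm_num]
          exact sqrt_sq zero_le_two
  calc √(N / |x|) = N ^ (1 / 2 : ℝ) * (|x| ^ (1 / 2 - ε) * |x| ^ (ε - 1)) := by
        rw [sqrt_eq_rpow, div_rpow hN0.le hx0.le, ← rpow_add hx0, div_eq_mul_inv, ← rpow_neg hx0.le]
        ring_nf
    _ ≤ N ^ (1 / 2 : ℝ) * ((4 * N ^ (a - 1)) ^ (1 / 2 - ε) * |x| ^ (ε - 1)) := by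
        have : 0 ≤ 1 / 2 - ε := by linarith
        gcongr
    _ = 4 ^ (1 / 2 - ε) * N ^ (1 / 2 + (a - 1) * (1 / 2 - ε)) * |x| ^ (ε - 1) := by
        rw [mul_rpow (by norm_num) (by positivity), ← rpow_mul hN0.le, rpow_add hN0]
        ring
    _ ≤ 2 * N ^ (a / 2 + ε) * |x| ^ (ε - 1) := by
        have := rpow_le_rpow_of_exponent_le hN
          (show 1 / 2 + (a - 1) * (1 / 2 - ε) ≤ a / 2 + ε by nlinarith)
        gcongr

lemma exists_norm_integral_phase_le (ha : 0 < a) (ha1 : a < 1) {ε : ℝ} (hε0 : 0 ≤ ε)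
    (hε : ε ≤ 1 / 2) :
    ∃ C > 0, ∀ N x t : ℝ, 1 ≤ N → x ≠ 0 → |t| ≤ 2 →
      ‖∫ ρ in N..(2 * N), Complex.exp (Complex.I * ((x * ρ + t * ρ ^ a : ℝ) : ℂ))‖ ≤
        C * N ^ (a / 2 + ε) * |x| ^ (ε - 1) := by
  have : 0 < 1 - a := by linarith
  set K := 8 / √(a * (1 - a) / 8) with hK
  refine ⟨6 + 2 * K, by positivity, fun N x t hN hx ht ↦ ?_⟩
  have hN0 : 0 < N := by linarith
  have hx0 : 0 < |x| := abs_pos.2 hx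
  set M := N ^ (a / 2 + ε) * |x| ^ (ε - 1) with hM
  suffices h : ‖∫ ρ in N..(2 * N), Complex.exp (Complex.I * ((x * ρ + t * ρ ^ a : ℝ) : ℂ))‖ ≤
      max (6 * M) (2 * K * M) by
    rw [mul_assoc, ← hM, add_mul]
    exact h.trans (max_le_add_of_nonneg (by positivity) (by positivity))
  rcases le_or_gt (2 * (|t| * N ^ (a - 1))) |x| with hxt | hxt
  · refine le_max_of_le_left ?_
    calc _ ≤ min (6 * N) (6 * |x|⁻¹) :=
          le_min ((norm_integral_phase_le a x t hN0).trans (by linarith))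
            (norm_integral_phase_le_div_abs ha ha1 hN0 hx hxt)
      _ = 6 * min N |x|⁻¹ := (mul_min_of_nonneg _ _ (by norm_num)).symm
      _ ≤ 6 * (N ^ ε * |x|⁻¹ ^ (1 - ε)) := by
          gcongr
          exact min_le_rpow_mul_rpow hN0 (inv_pos.2 hx0) hε0 (by linarith)
      _ ≤ 6 * M := by
          rw [hM, inv_rpow hx0.le, ← rpow_neg hx0.le, neg_sub]
          gcongr
          linarith
  · refine le_max_of_le_right ?_
    have hxN : |x| ≤ 4 * N ^ (a - 1) := by
      nlinarith [rpow_pos_of_pos hN0 (a - 1)]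
    calc _ ≤ 8 / √(a * (1 - a) / 8 * (|x| / N)) :=
          norm_integral_phase_le_div_sqrt ha ha1 hN0 hx hxt
      _ = K * √(N / |x|) := by
          rw [sqrt_mul (by positivity), hK, ← div_div, div_eq_mul_inv _ √(|x| / N), ← sqrt_inv,
            inv_div]
      _ ≤ K * (2 * M) := by
          gcongr
          rw [hM, ← mul_assoc]
          exact sqrt_div_abs_le_rpow ha hε0 hε hN hx hxN
      _ = 2 * K * M := by ring

end DyadicKernel

/-! ### Schur's test and the `TT*` method -/

section TTStar

open Set

variable {X Y : Type*} [MeasurableSpace X] [MeasurableSpace Y] {μ : Measure X} {ν : Measure Y}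

lemma sq_lintegral_le_of_sq_le_mul {f u v : X → ℝ≥0∞} (hu : AEMeasurable u μ)
    (hv : AEMeasurable v μ) (h : ∀ᵐ x ∂μ, f x ^ 2 ≤ u x * v x) :
    (∫⁻ x, f x ∂μ) ^ 2 ≤ (∫⁻ x, u x ∂μ) * ∫⁻ x, v x ∂μ := by
  have hsq (y : ℝ≥0∞) : (y ^ (1 / 2 : ℝ)) ^ 2 = y := by
    rw [← ENNReal.rpow_natCast, ← ENNReal.rpow_mul]
    norm_num
  have hf : ∀ᵐ x ∂μ, f x ≤ u x ^ (1 / 2 : ℝ) * v x ^ (1 / 2 : ℝ) := h.mono fun x hx ↦ by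
    rwa [← ENNReal.pow_le_pow_left_iff two_ne_zero, mul_pow, hsq, hsq]
  have hCS := ENNReal.lintegral_mul_le_Lp_mul_Lq μ HolderConjugate.two_two
    (hu.pow_const (1 / 2 : ℝ)) (hv.pow_const (1 / 2 : ℝ))
  simp only [Pi.mul_apply, ENNReal.rpow_two, hsq] at hCS
  calc (∫⁻ x, f x ∂μ) ^ 2
      ≤ ((∫⁻ x, u x ∂μ) ^ (1 / 2 : ℝ) * (∫⁻ x, v x ∂μ) ^ (1 / 2 : ℝ)) ^ 2 := by
        gcongr
        exact (lintegral_mono_ae hf).trans hCS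
    _ = (∫⁻ x, u x ∂μ) * ∫⁻ x, v x ∂μ := by rw [mul_pow, hsq, hsq]

lemma lintegral_mul_lintegral_kernel_le [SFinite μ] {f : X → ℝ≥0∞} (hf : AEMeasurable f μ)
    {G : X → X → ℝ≥0∞} (hG : Measurable (Function.uncurry G)) (hsymm : ∀ x x', G x x' = G x' x)
    {A : ℝ≥0∞} (hA : ∀ᵐ x ∂μ, ∫⁻ x', G x x' ∂μ ≤ A) :
    ∫⁻ x, f x * ∫⁻ x', f x' * G x x' ∂μ ∂μ ≤ A * ∫⁻ x, f x ^ 2 ∂μ := by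
  have hGx (x : X) : AEMeasurable (G x) μ := (hG.comp measurable_prodMk_left).aemeasurable
  have hfG : AEMeasurable (Function.uncurry fun x x' ↦ f x ^ 2 / 2 * G x x') (μ.prod μ) :=
    ((hf.pow_const 2).div_const 2).comp_fst.mul hG.aemeasurable
  have hfG' : AEMeasurable (Function.uncurry fun x x' ↦ f x' ^ 2 / 2 * G x x') (μ.prod μ) :=
    ((hf.pow_const 2).div_const 2).comp_snd.mul hG.aemeasurable
  have hhalf : ∫⁻ x, ∫⁻ x', f x ^ 2 / 2 * G x x' ∂μ ∂μ ≤ ∫⁻ x, A * (f x ^ 2 / 2) ∂μ :=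
    lintegral_mono_ae <| hA.mono fun x hx ↦ by
      rw [lintegral_const_mul'' _ (hGx x), mul_comm]
      gcongr
  have hhalf' : ∫⁻ x, ∫⁻ x', f x' ^ 2 / 2 * G x x' ∂μ ∂μ ≤ ∫⁻ x, A * (f x ^ 2 / 2) ∂μ := by
    rw [lintegral_lintegral_swap hfG']
    simpa only [hsymm] using hhalf
  have hyoung (y z : ℝ≥0∞) : y * z ≤ y ^ 2 / 2 + z ^ 2 / 2 := by
    simpa using ENNReal.young_inequality y z HolderConjugate.two_two
  calc ∫⁻ x, f x * ∫⁻ x', f x' * G x x' ∂μ ∂μ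
      = ∫⁻ x, ∫⁻ x', f x * f x' * G x x' ∂μ ∂μ := lintegral_congr fun x ↦ by
        simp only [mul_assoc]
        exact (lintegral_const_mul'' _ (hf.mul (hGx x))).symm
    _ ≤ ∫⁻ x, ∫⁻ x', (f x ^ 2 / 2 * G x x' + f x' ^ 2 / 2 * G x x') ∂μ ∂μ := by
        simp only [← add_mul]
        gcongr
        exact hyoung _ _
    _ = ∫⁻ x, ∫⁻ x', f x ^ 2 / 2 * G x x' ∂μ ∂μ + ∫⁻ x, ∫⁻ x', f x' ^ 2 / 2 * G x x' ∂μ ∂μ := by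
        exact (lintegral_congr fun x ↦ lintegral_add_left' ((hGx x).const_mul _) _).trans
          (lintegral_add_left' hfG.lintegral_prod_right' _)
    _ ≤ ∫⁻ x, A * (f x ^ 2 / 2) ∂μ + ∫⁻ x, A * (f x ^ 2 / 2) ∂μ := add_le_add hhalf hhalf'
    _ = A * ∫⁻ x, f x ^ 2 ∂μ := by
        rw [← lintegral_add_left' (((hf.pow_const 2).div_const 2).const_mul A),
          ← lintegral_const_mul'' _ (hf.pow_const 2)]
        simp only [← mul_add, ENNReal.add_halves]

lemma enorm_integral_conj_mul_self {f : X → ℂ} (hf : MemLp f 2 μ) :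
    ‖∫ x, conj (f x) * f x ∂μ‖ₑ = ∫⁻ x, ‖f x‖ₑ ^ 2 ∂μ := by
  have hnonneg : 0 ≤ ∫ x, ‖f x‖ ^ 2 ∂μ := integral_nonneg fun x ↦ by positivity
  have hconj (x : X) : conj (f x) * f x = ((‖f x‖ ^ 2 : ℝ) : ℂ) := by
    rw [Complex.conj_mul', Complex.ofReal_pow]
  simp only [hconj]
  rw [integral_complex_ofReal, ← ofReal_norm, Complex.norm_of_nonneg hnonneg,
    ofReal_integral_eq_lintegral_ofReal hf.norm.integrable_sq (.of_forall fun x ↦ by positivity)]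
  simp only [ENNReal.ofReal_pow (norm_nonneg _), ofReal_norm]

variable {e : X → Y → ℂ} {F : X → ℂ} {g : Y → ℂ}

lemma integral_conj_integral_conj_mul_mul [SFinite μ] [SFinite ν]
    (he : Measurable (Function.uncurry e)) (he1 : ∀ x y, ‖e x y‖ ≤ 1) (hF : Integrable F μ)
    (hg : Integrable g ν) :
    ∫ y, conj (∫ x, conj (e x y) * F x ∂μ) * g y ∂ν =
      ∫ x, conj (F x) * ∫ y, e x y * g y ∂ν ∂μ := by
  have hint : Integrable (Function.uncurry fun x y ↦ e x y * (conj (F x) * g y)) (μ.prod ν) :=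
    ((Complex.conjLIE.toContinuousLinearEquiv.integrable_comp_iff.2 hF).mul_prod hg).bdd_mul
      he.aestronglyMeasurable (.of_forall fun z ↦ he1 z.1 z.2)
  calc ∫ y, conj (∫ x, conj (e x y) * F x ∂μ) * g y ∂ν
      = ∫ y, ∫ x, e x y * (conj (F x) * g y) ∂μ ∂ν := by
        refine integral_congr_ae (.of_forall fun y ↦ ?_)
        simp only [← integral_conj, ← integral_mul_const, map_mul, Complex.conj_conj, mul_assoc]
    _ = ∫ x, ∫ y, e x y * (conj (F x) * g y) ∂ν ∂μ := (integral_integral_swap hint).symm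
    _ = ∫ x, conj (F x) * ∫ y, e x y * g y ∂ν ∂μ := by
        simp only [← integral_const_mul, mul_left_comm]

lemma norm_integral_mul_le {k : Y → ℂ} (hk : ∀ y, ‖k y‖ ≤ 1) (hg : Integrable g ν) :
    ‖∫ y, k y * g y ∂ν‖ ≤ ∫ y, ‖g y‖ ∂ν :=
  norm_integral_le_of_norm_le hg.norm <| .of_forall fun y ↦ by
    rw [norm_mul]
    exact mul_le_of_le_one_left (norm_nonneg _) (hk y)

lemma memLp_integral_mul [IsFiniteMeasure μ] [SFinite ν] (he : Measurable (Function.uncurry e))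
    (he1 : ∀ x y, ‖e x y‖ ≤ 1) (hg : Integrable g ν) (q : ℝ≥0∞) :
    MemLp (fun x ↦ ∫ y, e x y * g y ∂ν) q μ :=
  .of_bound (he.aestronglyMeasurable.mul hg.1.comp_snd).integral_prod_right' _
    (.of_forall fun x ↦ norm_integral_mul_le (he1 x) hg)

lemma lintegral_enorm_sq_integral_conj_mul_le [SFinite μ] [IsFiniteMeasure ν]
    (he : Measurable (Function.uncurry e)) (he1 : ∀ x y, ‖e x y‖ ≤ 1) (hF : Integrable F μ)
    {G : X → X → ℝ≥0∞} (hK : ∀ x x', ‖∫ y, e x y * conj (e x' y) ∂ν‖ₑ ≤ G x x') :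
    ∫⁻ y, ‖∫ x, conj (e x y) * F x ∂μ‖ₑ ^ 2 ∂ν ≤
      ∫⁻ x, ‖F x‖ₑ * ∫⁻ x', ‖F x'‖ₑ * G x x' ∂μ ∂μ := by
  have he' : Measurable (Function.uncurry fun y x ↦ conj (e x y)) :=
    Complex.continuous_conj.measurable.comp (he.comp measurable_swap)
  have he1' (y : Y) (x : X) : ‖conj (e x y)‖ ≤ 1 := by simpa only [RCLike.norm_conj] using he1 x y
  have hQ (q : ℝ≥0∞) : MemLp (fun y ↦ ∫ x, conj (e x y) * F x ∂μ) q ν :=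
    memLp_integral_mul he' he1' hF q
  have hswap (x : X) : ∫ y, e x y * ∫ x', conj (e x' y) * F x' ∂μ ∂ν =
      ∫ x', (∫ y, e x y * conj (e x' y) ∂ν) * F x' ∂μ := by
    have hint : Integrable (Function.uncurry fun y x' ↦ e x y * conj (e x' y) * F x')
        (ν.prod μ) :=
      (hF.comp_snd ν).bdd_mul (c := 1)
        (((he.comp measurable_prodMk_left).comp measurable_fst).mul he').aestronglyMeasurable
        (.of_forall fun z ↦ by
          simpa using mul_le_one₀ (he1 x z.1) (norm_nonneg _) (he1' z.1 z.2))
    simp only [← integral_const_mul, ← mul_assoc]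
    rw [integral_integral_swap hint]
    simp only [integral_mul_const]
  rw [← enorm_integral_conj_mul_self (hQ 2), integral_conj_integral_conj_mul_mul he he1 hF
    (memLp_one_iff_integrable.1 (hQ 1))]
  simp only [hswap]
  refine (enorm_integral_le_lintegral_enorm _).trans (lintegral_mono fun x ↦ ?_)
  rw [enorm_mul, RCLike.enorm_conj]
  gcongr
  refine (enorm_integral_le_lintegral_enorm _).trans (lintegral_mono fun x' ↦ ?_)
  rw [enorm_mul, mul_comm]
  gcongr
  exact hK x x'

lemma lintegral_enorm_sq_integral_mul_le [IsFiniteMeasure μ] [IsFiniteMeasure ν]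
    (he : Measurable (Function.uncurry e)) (he1 : ∀ x y, ‖e x y‖ ≤ 1) (hg : Integrable g ν)
    {G : X → X → ℝ≥0∞} (hG : Measurable (Function.uncurry G)) (hsymm : ∀ x x', G x x' = G x' x)
    {A : ℝ≥0∞} (hA : ∀ᵐ x ∂μ, ∫⁻ x', G x x' ∂μ ≤ A)
    (hK : ∀ x x', ‖∫ y, e x y * conj (e x' y) ∂ν‖ₑ ≤ G x x') :
    ∫⁻ x, ‖∫ y, e x y * g y ∂ν‖ₑ ^ 2 ∂μ ≤ A * ∫⁻ y, ‖g y‖ₑ ^ 2 ∂ν := by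
  set F : X → ℂ := fun x ↦ ∫ y, e x y * g y ∂ν
  set Q : Y → ℂ := fun y ↦ ∫ x, conj (e x y) * F x ∂μ
  set I := ∫⁻ x, ‖F x‖ₑ ^ 2 ∂μ with hI
  have hF (q : ℝ≥0∞) : MemLp F q μ := memLp_integral_mul he he1 hg q
  have hF1 : Integrable F μ := memLp_one_iff_integrable.1 (hF 1)
  have hQm : AEMeasurable Q ν := by
    have : Measurable (Function.uncurry fun y x ↦ conj (e x y)) :=
      Complex.continuous_conj.measurable.comp (he.comp measurable_swap)
    exact (this.aestronglyMeasurable.mul hF1.1.comp_snd).integral_prod_right'.aemeasurable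
  have hQ : ∫⁻ y, ‖Q y‖ₑ ^ 2 ∂ν ≤ A * I :=
    (lintegral_enorm_sq_integral_conj_mul_le he he1 hF1 hK).trans
      (lintegral_mul_lintegral_kernel_le hF1.1.enorm hG hsymm hA)
  have hIQ : I ≤ ∫⁻ y, ‖Q y‖ₑ * ‖g y‖ₑ ∂ν := by
    rw [hI, ← enorm_integral_conj_mul_self (hF 2),
      ← integral_conj_integral_conj_mul_mul he he1 hF1 hg]
    refine (enorm_integral_le_lintegral_enorm _).trans_eq ?_
    simp only [enorm_mul, RCLike.enorm_conj, Q]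
  have hI_sq : I * I ≤ I * (A * ∫⁻ y, ‖g y‖ₑ ^ 2 ∂ν) := by
    calc I * I ≤ (∫⁻ y, ‖Q y‖ₑ * ‖g y‖ₑ ∂ν) ^ 2 := by rw [← sq]; gcongr
      _ ≤ (∫⁻ y, ‖Q y‖ₑ ^ 2 ∂ν) * ∫⁻ y, ‖g y‖ₑ ^ 2 ∂ν :=
          sq_lintegral_le_of_sq_le_mul (hQm.enorm.pow_const 2) (hg.1.enorm.pow_const 2)
            (.of_forall fun y ↦ (mul_pow _ _ 2).le)
      _ ≤ A * I * ∫⁻ y, ‖g y‖ₑ ^ 2 ∂ν := by gcongr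
      _ = I * (A * ∫⁻ y, ‖g y‖ₑ ^ 2 ∂ν) := by rw [mul_comm A, mul_assoc]
  have hI_top : I ≠ ∞ := by
    rw [hI, ← enorm_integral_conj_mul_self (hF 2)]
    exact enorm_ne_top
  rcases eq_or_ne I 0 with hI0 | hI0
  · exact hI0.trans_le zero_le
  · exact (ENNReal.mul_le_mul_iff_right hI0 hI_top).1 hI_sq

end TTStar

/-! ### One-dimensional maximal estimates -/

section MaximalEstimate

open Set
open scoped NNReal

lemma lintegral_enorm_rpow_lt_top {β : ℝ} (hβ : -1 < β) :
    ∫⁻ y in Ioo (-1 : ℝ) 1, ‖y‖ₑ ^ β < ∞ := by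
  have hpos : IntervalIntegrable (fun y : ℝ ↦ |y| ^ β) volume 0 1 :=
    (intervalIntegral.intervalIntegrable_rpow' hβ).congr fun y hy ↦ by
      rw [uIoc_of_le zero_le_one] at hy
      simp only [abs_of_pos hy.1]
  have hneg : IntervalIntegrable (fun y : ℝ ↦ |y| ^ β) volume (-1) 0 := by
    simpa only [abs_neg, neg_zero] using ((IntervalIntegrable.iff_comp_neg).1 hpos).symm
  have hint := (intervalIntegrable_iff_integrableOn_Ioo_of_le (by norm_num)).1 (hneg.trans hpos)
  refine (lintegral_congr_ae (ae_restrict_of_ae ?_)).trans_lt hint.lintegral_lt_top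
  filter_upwards [Measure.ae_ne volume 0] with y hy
  rw [← ENNReal.ofReal_rpow_of_pos (abs_pos.2 hy), ← norm_eq_abs, ofReal_norm]

lemma lintegral_Ioo_comp_sub_le (f : ℝ → ℝ≥0∞) {x : ℝ} (hx : x ∈ Ioo (0 : ℝ) 1) :
    ∫⁻ x' in Ioo (0 : ℝ) 1, f (x - x') ≤ ∫⁻ y in Ioo (-1 : ℝ) 1, f y := by
  rw [← lintegral_indicator measurableSet_Ioo, ← lintegral_indicator measurableSet_Ioo,
    ← lintegral_sub_left_eq_self ((Ioo (-1) 1).indicator f) x]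
  refine lintegral_mono fun x' ↦ ?_
  by_cases hx' : x' ∈ Ioo (0 : ℝ) 1
  · have hsub : x - x' ∈ Ioo (-1 : ℝ) 1 := ⟨by linarith [hx.1, hx'.2], by linarith [hx.2, hx'.1]⟩
    rw [indicator_of_mem hx', indicator_of_mem hsub]
  · rw [indicator_of_notMem hx']
    exact zero_le

/-- The oscillating factor `e^{i(κrρ + τ(r)ρ^a)}`, in which the supremum over the times `t` has been
linearized by a choice `τ` of the time at each radius `r`. -/
def osc (a κ : ℝ) (τ : ℝ → ℝ) (r ρ : ℝ) : ℂ :=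
  Complex.exp (Complex.I * ((κ * r * ρ + τ r * ρ ^ a : ℝ) : ℂ))

variable {a κ : ℝ} {τ : ℝ → ℝ} {g : ℝ → ℂ}

lemma norm_osc (a κ : ℝ) (τ : ℝ → ℝ) (r ρ : ℝ) : ‖osc a κ τ r ρ‖ = 1 :=
  Complex.norm_exp_I_mul_ofReal _

lemma measurable_osc (a κ : ℝ) (hτ : Measurable τ) :
    Measurable (Function.uncurry (osc a κ τ)) := by
  unfold osc Function.uncurry
  have : Measurable fun z : ℝ × ℝ ↦ τ z.1 := hτ.comp measurable_fst
  fun_prop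

lemma osc_mul_conj (a κ : ℝ) (τ : ℝ → ℝ) (r r' ρ : ℝ) :
    osc a κ τ r ρ * conj (osc a κ τ r' ρ) =
      Complex.exp (Complex.I * (((κ * (r - r')) * ρ + (τ r - τ r') * ρ ^ a : ℝ) : ℂ)) := by
  rw [osc, osc, ← Complex.exp_conj, ← Complex.exp_add, map_mul, Complex.conj_I, Complex.conj_ofReal]
  push_cast
  ring_nf

lemma integrableOn_osc_mul (hτ : Measurable τ) {E : Set ℝ} (hg : IntegrableOn g E) (r : ℝ) :
    IntegrableOn (fun ρ ↦ osc a κ τ r ρ * g ρ) E :=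
  Integrable.bdd_mul hg ((measurable_osc a κ hτ).comp measurable_prodMk_left).aestronglyMeasurable
    (.of_forall fun ρ ↦ (norm_osc a κ τ r ρ).le)

lemma aemeasurable_integral_osc_mul {μ : Measure ℝ} [SFinite μ] (hτ : Measurable τ) {E : Set ℝ}
    (hg : IntegrableOn g E) : AEMeasurable (fun r ↦ ∫ ρ in E, osc a κ τ r ρ * g ρ) μ :=
  ((measurable_osc a κ hτ).aestronglyMeasurable.mul
    hg.1.comp_snd).integral_prod_right'.aemeasurable

lemma exists_lintegral_dyadic_le (ha : 0 < a) (ha1 : a < 1) {ε : ℝ} (hε : 0 < ε)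
    (hε2 : ε ≤ 1 / 2) :
    ∃ C : ℝ≥0, ∀ κ : ℝ, |κ| = 1 → ∀ τ : ℝ → ℝ, Measurable τ → (∀ r, |τ r| ≤ 1) →
      ∀ (g : ℝ → ℂ) (N : ℝ), 1 ≤ N → IntegrableOn g (Ioc N (2 * N)) →
      ∫⁻ r in Ioo (0 : ℝ) 1, ‖∫ ρ in Ioc N (2 * N), osc a κ τ r ρ * g ρ‖ₑ ^ 2 ≤
        C * ENNReal.ofReal (N ^ (a / 2 + ε)) * ∫⁻ ρ in Ioc N (2 * N), ‖g ρ‖ₑ ^ 2 := by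
  obtain ⟨C, hC, hkernel⟩ := exists_norm_integral_phase_le ha ha1 hε.le hε2
  set M := ∫⁻ y in Ioo (-1 : ℝ) 1, ‖y‖ₑ ^ (ε - 1)
  have hMtop : M ≠ ∞ := (lintegral_enorm_rpow_lt_top (by linarith)).ne
  refine ⟨C.toNNReal * M.toNNReal, fun κ hκ τ hτ hτ1 g N hN hg ↦ ?_⟩
  have : 0 < N := by linarith
  set D := ENNReal.ofReal (C * N ^ (a / 2 + ε)) with hD
  have hD0 : D ≠ 0 := (ENNReal.ofReal_pos.2 (by positivity)).ne'
  have hDM : D * M = ((C.toNNReal * M.toNNReal : ℝ≥0) : ℝ≥0∞) *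
      ENNReal.ofReal (N ^ (a / 2 + ε)) := by
    rw [hD, ENNReal.ofReal_mul hC.le, ENNReal.coe_mul, ENNReal.coe_toNNReal hMtop, mul_right_comm]
    rfl
  rw [← hDM]
  refine lintegral_enorm_sq_integral_mul_le (measurable_osc a κ hτ)
    (fun r ρ ↦ (norm_osc a κ τ r ρ).le) hg (G := fun x x' ↦ D * ‖x - x'‖ₑ ^ (ε - 1))
    (by fun_prop) (fun x x' ↦ by rw [enorm_sub_rev]) ?_ fun x x' ↦ ?_
  · refine (ae_restrict_iff' measurableSet_Ioo).2 (.of_forall fun x hx ↦ ?_)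
    rw [lintegral_const_mul _ (by fun_prop)]
    gcongr
    exact lintegral_Ioo_comp_sub_le (fun y ↦ ‖y‖ₑ ^ (ε - 1)) hx
  · rcases eq_or_ne x x' with rfl | hxx'
    · rw [sub_self, enorm_zero, ENNReal.zero_rpow_of_neg (by linarith), ENNReal.mul_top hD0]
      exact le_top
    · have hκ0 : κ ≠ 0 := by rintro rfl; simp at hκ
      have hle := hkernel N (κ * (x - x')) (τ x - τ x') hN (mul_ne_zero hκ0 (sub_ne_zero.2 hxx'))
        ((abs_sub _ _).trans (by linarith [hτ1 x, hτ1 x']))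
      rw [abs_mul, hκ, one_mul, intervalIntegral.integral_of_le (by linarith)] at hle
      simp only [osc_mul_conj]
      rw [hD, ← ofReal_norm (x - x'), norm_eq_abs,
        ENNReal.ofReal_rpow_of_pos (abs_pos.2 (sub_ne_zero.2 hxx')),
        ← ENNReal.ofReal_mul (by positivity), ← ofReal_norm]
      exact ENNReal.ofReal_le_ofReal hle

lemma iUnion_Ioc_two_pow : ⋃ k : ℕ, Ioc ((2 : ℝ) ^ k) (2 * 2 ^ k) = Ioi 1 := by
  ext x
  simp only [mem_iUnion, mem_Ioc, mem_Ioi]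
  refine ⟨fun ⟨k, hk, _⟩ ↦ (one_le_pow₀ one_le_two).trans_lt hk, fun hx ↦ ?_⟩
  obtain ⟨n, hn, hn'⟩ := exists_mem_Ioc_zpow (zero_lt_one.trans hx) (one_lt_two (α := ℝ))
  have hn0 : 0 ≤ n := by
    by_contra! h
    have : (2 : ℝ) ^ (n + 1) ≤ 1 := zpow_le_one_of_nonpos₀ one_le_two (by lia)
    linarith
  lift n to ℕ using hn0
  rw [zpow_add₀ two_ne_zero, zpow_natCast, zpow_one, mul_comm] at hn'
  exact ⟨n, by simpa only [zpow_natCast] using hn, hn'⟩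

lemma pairwise_disjoint_Ioc_two_pow :
    Pairwise (Function.onFun Disjoint fun k : ℕ ↦ Ioc ((2 : ℝ) ^ k) (2 * 2 ^ k)) := by
  have hmono : Monotone fun k : ℕ ↦ (2 : ℝ) ^ k := pow_right_mono₀ one_le_two
  simpa only [Nat.succ_eq_succ, Order.succ_eq_add_one, pow_succ'] using
    hmono.pairwise_disjoint_on_Ioc_succ

lemma sq_tsum_le_of_sq_le_mul {f u v : ℕ → ℝ≥0∞} (h : ∀ k, f k ^ 2 ≤ u k * v k) :
    (∑' k, f k) ^ 2 ≤ (∑' k, u k) * ∑' k, v k := by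
  simpa only [lintegral_count] using sq_lintegral_le_of_sq_le_mul (μ := Measure.count)
    (measurable_of_countable u).aemeasurable (measurable_of_countable v).aemeasurable (.of_forall h)

lemma tsum_ofReal_two_pow_rpow_neg_ne_top {ε : ℝ} (hε : 0 < ε) :
    ∑' k : ℕ, ENNReal.ofReal (((2 : ℝ) ^ k) ^ (-ε)) ≠ ∞ := by
  have hlt : (2 : ℝ) ^ (-ε) < 1 := rpow_lt_one_of_one_lt_of_neg one_lt_two (by linarith)
  have hpow (k : ℕ) : ((2 : ℝ) ^ k) ^ (-ε) = ((2 : ℝ) ^ (-ε)) ^ k :=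
    (rpow_pow_comm zero_le_two _ k).symm
  simp only [hpow]
  exact (summable_geometric_of_lt_one (by positivity) hlt).tsum_ofReal_ne_top

lemma enorm_sq_setIntegral_Ioi_one_le {f : ℝ → ℂ} (hf : IntegrableOn f (Ioi 1)) (ε : ℝ) :
    ‖∫ ρ in Ioi 1, f ρ‖ₑ ^ 2 ≤ (∑' k : ℕ, ENNReal.ofReal (((2 : ℝ) ^ k) ^ (-ε))) *
      ∑' k : ℕ, ENNReal.ofReal (((2 : ℝ) ^ k) ^ ε) *
        ‖∫ ρ in Ioc ((2 : ℝ) ^ k) (2 * 2 ^ k), f ρ‖ₑ ^ 2 := by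
  calc ‖∫ ρ in Ioi 1, f ρ‖ₑ ^ 2
      ≤ (∑' k : ℕ, ‖∫ ρ in Ioc ((2 : ℝ) ^ k) (2 * 2 ^ k), f ρ‖ₑ) ^ 2 := by
        rw [← iUnion_Ioc_two_pow, integral_iUnion (fun _ ↦ measurableSet_Ioc)
          pairwise_disjoint_Ioc_two_pow (by rwa [iUnion_Ioc_two_pow])]
        gcongr
        exact enorm_tsum_le_tsum_enorm
    _ ≤ _ := sq_tsum_le_of_sq_le_mul fun k ↦ by
        have hinv : ((2 : ℝ) ^ k) ^ (-ε) * ((2 : ℝ) ^ k) ^ ε = 1 := by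
          rw [← rpow_add (by positivity), neg_add_cancel, rpow_zero]
        rw [← mul_assoc, ← ENNReal.ofReal_mul (by positivity), hinv, ENNReal.ofReal_one, one_mul]

lemma rpow_le_one_add_sq_rpow {N ρ b s : ℝ} (hN : 1 ≤ N) (hρ : N ≤ ρ) (hs : 0 ≤ s)
    (hb : b ≤ 2 * s) : N ^ b ≤ (1 + ρ ^ 2) ^ s := by
  have : 0 < N := by linarith
  calc N ^ b ≤ N ^ (2 * s) := rpow_le_rpow_of_exponent_le hN hb
    _ = (N ^ 2) ^ s := by rw [rpow_mul (by positivity), rpow_two]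
    _ ≤ (1 + ρ ^ 2) ^ s := by
        gcongr
        nlinarith

lemma exists_lintegral_high_le (ha : 0 < a) (ha1 : a < 1) {s : ℝ} (hs : a / 4 < s) :
    ∃ C : ℝ≥0, ∀ κ : ℝ, |κ| = 1 → ∀ τ : ℝ → ℝ, Measurable τ → (∀ r, |τ r| ≤ 1) →
      ∀ g : ℝ → ℂ, IntegrableOn g (Ioi 1) →
      ∫⁻ r in Ioo (0 : ℝ) 1, ‖∫ ρ in Ioi 1, osc a κ τ r ρ * g ρ‖ₑ ^ 2 ≤
        C * ∫⁻ ρ in Ioi (1 : ℝ), ENNReal.ofReal ((1 + ρ ^ 2) ^ s) * ‖g ρ‖ₑ ^ 2 := by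
  obtain ⟨ε, hε, hε2, hεs⟩ : ∃ ε > 0, ε ≤ 1 / 2 ∧ ε ≤ s - a / 4 :=
    ⟨min (1 / 2) (s - a / 4), lt_min (by norm_num) (by linarith), min_le_left _ _, min_le_right _ _⟩
  obtain ⟨C, hdyadic⟩ := exists_lintegral_dyadic_le ha ha1 hε hε2
  set S := ∑' k : ℕ, ENNReal.ofReal (((2 : ℝ) ^ k) ^ (-ε))
  have hStop : S ≠ ∞ := tsum_ofReal_two_pow_rpow_neg_ne_top hε
  refine ⟨S.toNNReal * C, fun κ hκ τ hτ hτ1 g hg ↦ ?_⟩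
  have hgk (k : ℕ) : IntegrableOn g (Ioc (2 ^ k) (2 * 2 ^ k)) := hg.mono_set fun ρ hρ ↦
    (one_le_pow₀ one_le_two).trans_lt hρ.1
  have hpiece (k : ℕ) : ENNReal.ofReal (((2 : ℝ) ^ k) ^ ε) *
      ∫⁻ r in Ioo (0 : ℝ) 1, ‖∫ ρ in Ioc ((2 : ℝ) ^ k) (2 * 2 ^ k), osc a κ τ r ρ * g ρ‖ₑ ^ 2 ≤
      C * ∫⁻ ρ in Ioc ((2 : ℝ) ^ k) (2 * 2 ^ k),
        ENNReal.ofReal ((1 + ρ ^ 2) ^ s) * ‖g ρ‖ₑ ^ 2 := by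
    have hN : (1 : ℝ) ≤ 2 ^ k := one_le_pow₀ one_le_two
    refine (mul_le_mul_right (hdyadic κ hκ τ hτ hτ1 g _ hN (hgk k)) _).trans ?_
    rw [mul_assoc, mul_left_comm, ← mul_assoc (ENNReal.ofReal _),
      ← ENNReal.ofReal_mul (by positivity), ← rpow_add (by positivity),
      ← lintegral_const_mul'' _ ((hgk k).1.enorm.pow_const 2)]
    refine mul_le_mul_right (setLIntegral_mono' measurableSet_Ioc fun ρ hρ ↦ ?_) _
    gcongr
    exact rpow_le_one_add_sq_rpow hN hρ.1.le (by linarith) (by linarith)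
  calc ∫⁻ r in Ioo (0 : ℝ) 1, ‖∫ ρ in Ioi 1, osc a κ τ r ρ * g ρ‖ₑ ^ 2
      ≤ ∫⁻ r in Ioo (0 : ℝ) 1, S * ∑' k : ℕ, ENNReal.ofReal (((2 : ℝ) ^ k) ^ ε) *
          ‖∫ ρ in Ioc ((2 : ℝ) ^ k) (2 * 2 ^ k), osc a κ τ r ρ * g ρ‖ₑ ^ 2 :=
        lintegral_mono fun r ↦ enorm_sq_setIntegral_Ioi_one_le (integrableOn_osc_mul hτ hg r) ε
    _ = S * ∑' k : ℕ, ENNReal.ofReal (((2 : ℝ) ^ k) ^ ε) * ∫⁻ r in Ioo (0 : ℝ) 1,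
          ‖∫ ρ in Ioc ((2 : ℝ) ^ k) (2 * 2 ^ k), osc a κ τ r ρ * g ρ‖ₑ ^ 2 := by
        have hmeas (k : ℕ) := ((aemeasurable_integral_osc_mul (a := a) (κ := κ)
          (μ := volume.restrict (Ioo 0 1)) hτ (hgk k)).enorm.pow_const 2)
        rw [lintegral_const_mul' _ _ hStop, lintegral_tsum fun k ↦ (hmeas k).const_mul _]
        simp only [lintegral_const_mul' _ _ ENNReal.ofReal_ne_top]
    _ ≤ S * ∑' k : ℕ, C * ∫⁻ ρ in Ioc ((2 : ℝ) ^ k) (2 * 2 ^ k),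
          ENNReal.ofReal ((1 + ρ ^ 2) ^ s) * ‖g ρ‖ₑ ^ 2 := by
        exact mul_le_mul_right (ENNReal.tsum_le_tsum hpiece) S
    _ = (S.toNNReal * C : ℝ≥0) *
          ∫⁻ ρ in Ioi (1 : ℝ), ENNReal.ofReal ((1 + ρ ^ 2) ^ s) * ‖g ρ‖ₑ ^ 2 := by
        rw [ENNReal.tsum_mul_left, ← lintegral_iUnion (fun _ ↦ measurableSet_Ioc)
          pairwise_disjoint_Ioc_two_pow, iUnion_Ioc_two_pow, ENNReal.coe_mul,
          ENNReal.coe_toNNReal hStop, mul_assoc]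

lemma lintegral_low_le (hg : IntegrableOn g (Ioc 0 1)) :
    ∫⁻ r in Ioo (0 : ℝ) 1, ‖∫ ρ in Ioc 0 1, osc a κ τ r ρ * g ρ‖ₑ ^ 2 ≤
      ∫⁻ ρ in Ioc (0 : ℝ) 1, ‖g ρ‖ₑ ^ 2 := by
  have hpoint (r : ℝ) : ‖∫ ρ in Ioc 0 1, osc a κ τ r ρ * g ρ‖ₑ ^ 2 ≤
      ∫⁻ ρ in Ioc (0 : ℝ) 1, ‖g ρ‖ₑ ^ 2 := by
    calc ‖∫ ρ in Ioc 0 1, osc a κ τ r ρ * g ρ‖ₑ ^ 2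
        ≤ (∫⁻ ρ in Ioc 0 1, ‖osc a κ τ r ρ * g ρ‖ₑ) ^ 2 := by
          gcongr
          exact enorm_integral_le_lintegral_enorm _
      _ ≤ (∫⁻ _ in Ioc (0 : ℝ) 1, 1) * ∫⁻ ρ in Ioc (0 : ℝ) 1, ‖g ρ‖ₑ ^ 2 :=
          sq_lintegral_le_of_sq_le_mul aemeasurable_const (hg.1.enorm.pow_const 2)
            (.of_forall fun ρ ↦ by
              rw [enorm_mul, ← ofReal_norm, norm_osc, ENNReal.ofReal_one, one_mul, one_mul])
      _ = ∫⁻ ρ in Ioc (0 : ℝ) 1, ‖g ρ‖ₑ ^ 2 := by simp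
  exact (lintegral_mono hpoint).trans_eq (by simp)

lemma ennreal_add_sq_le (x y : ℝ≥0∞) : (x + y) ^ 2 ≤ 2 * (x ^ 2 + y ^ 2) := by
  have h := ENNReal.rpow_add_le_mul_rpow_add_rpow x y one_le_two
  norm_num at h
  exact h

lemma exists_lintegral_osc_le (ha : 0 < a) (ha1 : a < 1) {s : ℝ} (hs : a / 4 < s) :
    ∃ C : ℝ≥0, ∀ κ : ℝ, |κ| = 1 → ∀ τ : ℝ → ℝ, Measurable τ → (∀ r, |τ r| ≤ 1) →
      ∀ g : ℝ → ℂ, IntegrableOn g (Ioi 0) →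
      ∫⁻ r in Ioo (0 : ℝ) 1, ‖∫ ρ in Ioi 0, osc a κ τ r ρ * g ρ‖ₑ ^ 2 ≤
        C * ∫⁻ ρ in Ioi (0 : ℝ), ENNReal.ofReal ((1 + ρ ^ 2) ^ s) * ‖g ρ‖ₑ ^ 2 := by
  obtain ⟨C, hhigh⟩ := exists_lintegral_high_le ha ha1 hs
  refine ⟨2 * (1 + C), fun κ hκ τ hτ hτ1 g hg ↦ ?_⟩
  set W := ∫⁻ ρ in Ioi (0 : ℝ), ENNReal.ofReal ((1 + ρ ^ 2) ^ s) * ‖g ρ‖ₑ ^ 2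
  have hg1 : IntegrableOn g (Ioc 0 1) := hg.mono_set Ioc_subset_Ioi_self
  have hg2 : IntegrableOn g (Ioi 1) := hg.mono_set (Ioi_subset_Ioi zero_le_one)
  have hlowW : ∫⁻ ρ in Ioc (0 : ℝ) 1, ‖g ρ‖ₑ ^ 2 ≤ W := by
    refine (lintegral_mono fun ρ ↦ ?_).trans (lintegral_mono_set Ioc_subset_Ioi_self)
    refine le_mul_of_one_le_left' (ENNReal.one_le_ofReal.2 (one_le_rpow ?_ (by linarith)))
    exact le_add_of_nonneg_right (sq_nonneg ρ)
  calc ∫⁻ r in Ioo (0 : ℝ) 1, ‖∫ ρ in Ioi 0, osc a κ τ r ρ * g ρ‖ₑ ^ 2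
      ≤ ∫⁻ r in Ioo (0 : ℝ) 1, 2 * (‖∫ ρ in Ioc 0 1, osc a κ τ r ρ * g ρ‖ₑ ^ 2 +
          ‖∫ ρ in Ioi 1, osc a κ τ r ρ * g ρ‖ₑ ^ 2) := by
        refine lintegral_mono fun r ↦ le_trans ?_ (ennreal_add_sq_le _ _)
        rw [← Ioc_union_Ioi_eq_Ioi zero_le_one, setIntegral_union Ioc_disjoint_Ioi_same
          measurableSet_Ioi (integrableOn_osc_mul hτ hg1 r) (integrableOn_osc_mul hτ hg2 r)]
        gcongr
        exact enorm_add_le _ _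
    _ = 2 * ((∫⁻ r in Ioo (0 : ℝ) 1, ‖∫ ρ in Ioc 0 1, osc a κ τ r ρ * g ρ‖ₑ ^ 2) +
          ∫⁻ r in Ioo (0 : ℝ) 1, ‖∫ ρ in Ioi 1, osc a κ τ r ρ * g ρ‖ₑ ^ 2) := by
        rw [lintegral_const_mul' _ _ ENNReal.ofNat_ne_top,
          lintegral_add_left' ((aemeasurable_integral_osc_mul hτ hg1).enorm.pow_const 2)]
    _ ≤ 2 * (W + C * W) := by
        gcongr
        · exact (lintegral_low_le hg1).trans hlowW
        · exact (hhigh κ hκ τ hτ hτ1 g hg2).trans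
            (mul_le_mul_right (lintegral_mono_set (Ioi_subset_Ioi zero_le_one)) _)
    _ = (2 * (1 + C) : ℝ≥0) * W := by
        push_cast
        ring

lemma sq_min_one_inv_le {y σ : ℝ} (hy : 0 < y) (hσ : 0 ≤ σ) (hσ1 : σ ≤ 1) :
    min 1 y⁻¹ ^ 2 ≤ y ^ (σ - 1) := by
  rcases le_total y 1 with h | h
  · calc min 1 y⁻¹ ^ 2 ≤ 1 := pow_le_one₀ (by positivity) (min_le_left _ _)
      _ ≤ y ^ (σ - 1) := one_le_rpow_of_pos_of_le_one_of_nonpos hy h (by linarith)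
  · calc min 1 y⁻¹ ^ 2 ≤ y⁻¹ ^ 2 := by
          gcongr
          exact min_le_right _ _
      _ = y ^ (-2 : ℝ) := by rw [rpow_neg hy.le, rpow_two, inv_pow]
      _ ≤ y ^ (σ - 1) := rpow_le_rpow_of_exponent_le h (by linarith)

lemma sq_min_one_inv_mul_rpow_le {r ρ σ s : ℝ} (hr : 0 < r) (hρ : 1 < ρ) (hσ : 0 ≤ σ)
    (hσ1 : σ ≤ 1) (hσs : σ ≤ s) :
    min 1 (r * ρ)⁻¹ ^ 2 * (1 + ρ ^ 2) ^ (-s) ≤ r ^ (σ - 1) * ρ ^ (-1 - σ) := by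
  have hρ0 : 0 < ρ := by linarith
  have hweight : (1 + ρ ^ 2) ^ (-s) ≤ ρ ^ (-(2 * σ)) := by
    rw [rpow_neg (by positivity), rpow_neg hρ0.le]
    gcongr
    exact rpow_le_one_add_sq_rpow hρ.le le_rfl (hσ.trans hσs) (by linarith)
  calc min 1 (r * ρ)⁻¹ ^ 2 * (1 + ρ ^ 2) ^ (-s)
      ≤ (r * ρ) ^ (σ - 1) * ρ ^ (-(2 * σ)) := by
        gcongr
        exact sq_min_one_inv_le (by positivity) hσ hσ1
    _ = r ^ (σ - 1) * ρ ^ (-1 - σ) := by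
        rw [mul_rpow hr.le hρ0.le, mul_assoc, ← rpow_add hρ0]
        ring_nf

lemma lintegral_sq_min_one_inv_mul_rpow_le {r σ s : ℝ} (hr : 0 < r) (hσ : 0 ≤ σ)
    (hσ1 : σ ≤ 1) (hσs : σ ≤ s) :
    ∫⁻ ρ in Ioi 0, ENNReal.ofReal (min 1 (r * ρ)⁻¹ ^ 2 * (1 + ρ ^ 2) ^ (-s)) ≤
      1 + ENNReal.ofReal (r ^ (σ - 1)) * ∫⁻ ρ in Ioi 1, ENNReal.ofReal (ρ ^ (-1 - σ)) := by
  rw [← Ioc_union_Ioi_eq_Ioi zero_le_one, lintegral_union measurableSet_Ioi Ioc_disjoint_Ioi_same]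
  refine add_le_add ?_ ?_
  · calc ∫⁻ ρ in Ioc 0 1, ENNReal.ofReal (min 1 (r * ρ)⁻¹ ^ 2 * (1 + ρ ^ 2) ^ (-s))
        ≤ ∫⁻ _ in Ioc (0 : ℝ) 1, 1 := by
          refine setLIntegral_mono' measurableSet_Ioc fun ρ hρ ↦ ENNReal.ofReal_le_one.2 ?_
          have : 0 ≤ min 1 (r * ρ)⁻¹ :=
            le_min zero_le_one (inv_nonneg.2 (mul_nonneg hr.le hρ.1.le))
          refine mul_le_one₀ (pow_le_one₀ this (min_le_left _ _)) (by positivity) ?_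
          exact rpow_le_one_of_one_le_of_nonpos (le_add_of_nonneg_right (sq_nonneg ρ))
            (by linarith)
      _ = 1 := by simp
  · rw [← lintegral_const_mul' _ _ ENNReal.ofReal_ne_top]
    refine setLIntegral_mono' measurableSet_Ioi fun ρ hρ ↦ ?_
    rw [← ENNReal.ofReal_mul (by positivity)]
    exact ENNReal.ofReal_le_ofReal (sq_min_one_inv_mul_rpow_le hr hρ hσ hσ1 hσs)

lemma exists_lintegral_error_le {s : ℝ} (hs : 0 < s) :
    ∃ C : ℝ≥0, ∀ g : ℝ → ℂ, IntegrableOn g (Ioi 0) →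
      ∫⁻ r in Ioo (0 : ℝ) 1,
        (∫⁻ ρ in Ioi (0 : ℝ), ENNReal.ofReal (min 1 (r * ρ)⁻¹) * ‖g ρ‖ₑ) ^ 2 ≤
        C * ∫⁻ ρ in Ioi (0 : ℝ), ENNReal.ofReal ((1 + ρ ^ 2) ^ s) * ‖g ρ‖ₑ ^ 2 := by
  obtain ⟨σ, hσ, hσ1, hσs⟩ : ∃ σ > 0, σ ≤ 1 ∧ σ ≤ s :=
    ⟨min 1 s, lt_min one_pos hs, min_le_left _ _, min_le_right _ _⟩
  set J := ∫⁻ ρ in Ioi (1 : ℝ), ENNReal.ofReal (ρ ^ (-1 - σ))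
  set C := ∫⁻ r in Ioo (0 : ℝ) 1, (1 + ENNReal.ofReal (r ^ (σ - 1)) * J) with hC
  have hJtop : J ≠ ∞ :=
    (integrableOn_Ioi_rpow_of_lt (by linarith) one_pos).lintegral_lt_top.ne
  have hpow : ∫⁻ r in Ioo (0 : ℝ) 1, ENNReal.ofReal (r ^ (σ - 1)) ≠ ∞ :=
    ((intervalIntegral.integrableOn_Ioo_rpow_iff zero_lt_one).2 (by linarith)).lintegral_lt_top.ne
  have hCtop : C ≠ ∞ := by
    rw [hC, lintegral_add_left measurable_const, lintegral_mul_const' _ _ hJtop]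
    exact ENNReal.add_ne_top.2 ⟨by simp, ENNReal.mul_ne_top hpow hJtop⟩
  refine ⟨C.toNNReal, fun g hg ↦ ?_⟩
  rw [ENNReal.coe_toNNReal hCtop, hC, ← lintegral_mul_const'' _ (by fun_prop)]
  refine setLIntegral_mono' measurableSet_Ioo fun r hr ↦ ?_
  refine le_trans ?_
    (mul_le_mul_left (lintegral_sq_min_one_inv_mul_rpow_le hr.1 hσ.le hσ1 hσs) _)
  refine sq_lintegral_le_of_sq_le_mul (by fun_prop)
    ((by fun_prop : Measurable fun ρ : ℝ ↦ ENNReal.ofReal ((1 + ρ ^ 2) ^ s)).aemeasurable.mul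
      (hg.1.enorm.pow_const 2)) ?_
  refine (ae_restrict_iff' measurableSet_Ioi).2 (.of_forall fun ρ hρ ↦ le_of_eq ?_)
  have hmin : 0 ≤ min 1 (r * ρ)⁻¹ := le_min zero_le_one (inv_nonneg.2 (mul_nonneg hr.1.le hρ.le))
  have hcancel : (1 + ρ ^ 2) ^ (-s) * (1 + ρ ^ 2) ^ s = 1 := by
    rw [← rpow_add (by positivity), neg_add_cancel, rpow_zero]
  rw [← mul_assoc, ← ENNReal.ofReal_mul (by positivity), mul_assoc, hcancel, mul_one, mul_pow,
    ← ENNReal.ofReal_pow hmin]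

end MaximalEstimate

/-! ### The perturbed oscillator `w'' = κ w / z² - w` -/

section PerturbedOscillator

open Set Filter Topology

lemma exists_norm_sub_le_div {E : Type*} [NormedAddCommGroup E] [NormedSpace ℝ E]
    [CompleteSpace E] {f f' : ℝ → E} {K : ℝ} (hf : ∀ z ≥ 1, HasDerivAt f (f' z) z)
    (hf' : ∀ z ≥ 1, ‖f' z‖ ≤ K / z ^ 2) : ∃ β, ∀ z ≥ 1, ‖f z - β‖ ≤ K / z := by
  have hpow {z : ℝ} (hz : z ≥ 1) : IntegrableOn (fun y : ℝ ↦ K * y ^ (-2 : ℝ)) (Ioi z) :=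
    (integrableOn_Ioi_rpow_of_lt (by norm_num) (by linarith)).const_mul K
  have hbound {z : ℝ} (hz : z ≥ 1) :
      ∀ᵐ y ∂volume.restrict (Ioi z), ‖f' y‖ ≤ K * y ^ (-2 : ℝ) := by
    refine (ae_restrict_iff' measurableSet_Ioi).2 (.of_forall fun y (hy : z < y) ↦ ?_)
    have hy1 : 1 ≤ y := hz.le.trans hy.le
    rw [rpow_neg (by linarith), rpow_two, ← div_eq_mul_inv]
    exact hf' y hy1
  have hint : IntegrableOn f' (Ioi 1) := by
    refine (hpow le_rfl).mono' ?_ (hbound le_rfl)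
    refine (aestronglyMeasurable_deriv f _).congr ((ae_restrict_iff' measurableSet_Ioi).2 ?_)
    exact .of_forall fun y (hy : 1 < y) ↦ (hf y hy.le).deriv
  have hlim : Tendsto f atTop (𝓝 (limUnder atTop f)) :=
    tendsto_limUnder_of_hasDerivAt_of_integrableOn_Ioi (fun y (hy : 1 < y) ↦ hf y hy.le) hint
  refine ⟨limUnder atTop f, fun z hz ↦ ?_⟩
  calc ‖f z - limUnder atTop f‖ = ‖∫ y in Ioi z, f' y‖ := by
        rw [integral_Ioi_of_hasDerivAt_of_tendsto' (fun y (hy : z ≤ y) ↦ hf y (hz.le.trans hy))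
          (hint.mono_set (Ioi_subset_Ioi hz)) hlim, norm_sub_rev]
    _ ≤ ∫ y in Ioi z, K * y ^ (-2 : ℝ) := norm_integral_le_of_norm_le (hpow hz) (hbound hz)
    _ = K / z := by
        rw [integral_const_mul, integral_Ioi_rpow_of_lt (by norm_num) (by linarith)]
        norm_num [rpow_neg_one]
        rfl

variable {κ : ℝ} {w w' : ℝ → ℝ}

lemma hasDerivAt_energy {z : ℝ} (hz : 0 < z) (hw : HasDerivAt w (w' z) z)
    (hw' : HasDerivAt w' (κ * w z / z ^ 2 - w z) z) :
    HasDerivAt (fun z ↦ (w z ^ 2 + w' z ^ 2) * exp (|κ| / z))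
      ((2 * κ * w z * w' z - |κ| * (w z ^ 2 + w' z ^ 2)) / z ^ 2 * exp (|κ| / z)) z := by
  refine (((hw.pow 2).add (hw'.pow 2)).mul
    (((hasDerivAt_inv hz.ne').const_mul |κ|).exp)).congr_deriv ?_
  simp only [Pi.add_apply, Pi.pow_apply, div_eq_mul_inv]
  push_cast
  field_simp
  ring

lemma antitoneOn_energy (hw : ∀ z > 0, HasDerivAt w (w' z) z)
    (hw' : ∀ z > 0, HasDerivAt w' (κ * w z / z ^ 2 - w z) z) :
    AntitoneOn (fun z ↦ (w z ^ 2 + w' z ^ 2) * exp (|κ| / z)) (Ioi 0) := by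
  have hderiv (z : ℝ) (hz : 0 < z) := hasDerivAt_energy hz (hw z hz) (hw' z hz)
  refine antitoneOn_of_deriv_nonpos (convex_Ioi 0)
    (fun z hz ↦ (hderiv z hz).continuousAt.continuousWithinAt)
    (fun z hz ↦ (hderiv z (interior_subset hz)).differentiableAt.differentiableWithinAt)
    fun z hz ↦ ?_
  rw [(hderiv z (interior_subset hz)).deriv]
  refine mul_nonpos_of_nonpos_of_nonneg (div_nonpos_of_nonpos_of_nonneg ?_ (by positivity))
    (exp_pos _).le
  have hκ : 2 * κ * w z * w' z ≤ |κ| * |2 * w z * w' z| := by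
    rw [← abs_mul]
    exact (le_abs_self _).trans_eq (by ring_nf)
  have hyoung : |2 * w z * w' z| ≤ w z ^ 2 + w' z ^ 2 :=
    abs_le.2 ⟨by linarith [sq_nonneg (w z + w' z)], two_mul_le_add_sq _ _⟩
  linarith [mul_le_mul_of_nonneg_left hyoung (abs_nonneg κ)]

lemma exists_abs_le_of_perturbed_oscillator (hw : ∀ z > 0, HasDerivAt w (w' z) z)
    (hw' : ∀ z > 0, HasDerivAt w' (κ * w z / z ^ 2 - w z) z) : ∃ M, ∀ z ≥ 1, |w z| ≤ M := by
  refine ⟨√((w 1 ^ 2 + w' 1 ^ 2) * exp (|κ| / 1)), fun z hz ↦ abs_le_sqrt ?_⟩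
  have hz0 : 0 < z := by linarith
  calc w z ^ 2 ≤ w z ^ 2 + w' z ^ 2 := le_add_of_nonneg_right (sq_nonneg _)
    _ ≤ (w z ^ 2 + w' z ^ 2) * exp (|κ| / z) :=
        le_mul_of_one_le_right (by positivity) (one_le_exp (by positivity))
    _ ≤ (w 1 ^ 2 + w' 1 ^ 2) * exp (|κ| / 1) :=
        antitoneOn_energy hw hw' (mem_Ioi.2 one_pos) (mem_Ioi.2 hz0) hz

lemma norm_exp_neg_I_mul_ofReal (z : ℝ) : ‖Complex.exp (-(Complex.I * z))‖ = 1 := by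
  simpa using Complex.norm_exp_I_mul_ofReal (-z)

lemma hasDerivAt_exp_mul_variation {z : ℝ} (hw : HasDerivAt w (w' z) z)
    (hw' : HasDerivAt w' (κ * w z / z ^ 2 - w z) z) :
    HasDerivAt (fun z : ℝ ↦ Complex.exp (-(Complex.I * z)) * ((w' z : ℂ) + Complex.I * w z))
      (Complex.exp (-(Complex.I * z)) * (κ * w z / z ^ 2 : ℝ)) z := by
  have hexp : HasDerivAt (fun z : ℝ ↦ Complex.exp (-(Complex.I * z))) _ z :=
    ((Complex.ofRealCLM.hasDerivAt (x := z)).const_mul Complex.I).neg.cexp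
  refine (hexp.mul (hw'.ofReal_comp.add (hw.ofReal_comp.const_mul Complex.I))).congr_deriv ?_
  simp only [Pi.add_apply, Complex.ofRealCLM_apply]
  push_cast
  linear_combination (-Complex.exp (-(Complex.I * z)) * w z) * Complex.I_sq

-- Variation of constants: `e^{-iz} (w' + i w)` would be constant for the free oscillator.
lemma exists_norm_sub_exp_le_div (hw : ∀ z > 0, HasDerivAt w (w' z) z)
    (hw' : ∀ z > 0, HasDerivAt w' (κ * w z / z ^ 2 - w z) z) :
    ∃ A B : ℂ, ∃ D : ℝ, ∀ z : ℝ, z ≥ 1 → ‖(w z : ℂ) -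
      (A * Complex.exp (Complex.I * z) + B * Complex.exp (-(Complex.I * z)))‖ ≤ D / z := by
  obtain ⟨M, hM⟩ := exists_abs_le_of_perturbed_oscillator hw hw'
  set α : ℝ → ℂ := fun z ↦ Complex.exp (-(Complex.I * z)) * ((w' z : ℂ) + Complex.I * w z) with hα
  obtain ⟨β, hβ⟩ : ∃ β, ∀ z ≥ 1, ‖α z - β‖ ≤ |κ| * M / z := by
    refine exists_norm_sub_le_div (fun z hz ↦ hasDerivAt_exp_mul_variation
      (hw z (by linarith)) (hw' z (by linarith))) fun z hz ↦ ?_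
    rw [norm_mul, norm_exp_neg_I_mul_ofReal, one_mul, Complex.norm_real, norm_div, norm_mul,
      norm_eq_abs, norm_eq_abs, norm_of_nonneg (sq_nonneg z)]
    gcongr
    exact hM z hz
  refine ⟨β / (2 * Complex.I), -(conj β / (2 * Complex.I)), |κ| * M, fun z hz ↦ ?_⟩
  have hexp : Complex.exp (Complex.I * z) * Complex.exp (-(Complex.I * z)) = 1 := by
    rw [← Complex.exp_add, add_neg_cancel, Complex.exp_zero]
  have hconj : conj (α z) = Complex.exp (Complex.I * z) * ((w' z : ℂ) - Complex.I * w z) := by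
    simp only [hα, map_mul, map_add, Complex.conj_ofReal, Complex.conj_I, ← Complex.exp_conj,
      map_neg]
    ring_nf
  have hrepr : (w z : ℂ) - (β / (2 * Complex.I) * Complex.exp (Complex.I * z) +
        -(conj β / (2 * Complex.I)) * Complex.exp (-(Complex.I * z))) =
      ((α z - β) * Complex.exp (Complex.I * z) -
        conj (α z - β) * Complex.exp (-(Complex.I * z))) / (2 * Complex.I) := by
    rw [map_sub, hconj]
    simp only [hα]
    field_simp
    linear_combination (-2 * Complex.I * (w z)) * hexp
  have hnum := norm_sub_le ((α z - β) * Complex.exp (Complex.I * z))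
    (conj (α z - β) * Complex.exp (-(Complex.I * z)))
  rw [norm_mul, norm_mul, Complex.norm_exp_I_mul_ofReal, norm_exp_neg_I_mul_ofReal,
    RCLike.norm_conj, mul_one] at hnum
  rw [hrepr, norm_div, show ‖2 * Complex.I‖ = 2 by simp]
  linarith [hβ z hz]

end PerturbedOscillator

/-! ### Cosine integrals over the unit sphere -/

section SphereIntegral

open Set Metric
open scoped Pointwise

lemma hasDerivAt_integral_of_continuous {X F : Type*} [TopologicalSpace X] [CompactSpace X]
    [MeasurableSpace X] [OpensMeasurableSpace X] {μ : Measure X} [IsFiniteMeasure μ]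
    [NormedAddCommGroup F] [NormedSpace ℝ F] [SecondCountableTopology F]
    {φ φ' : ℝ → X → F} (hφ : ∀ t, Continuous (φ t)) (hφ' : Continuous (Function.uncurry φ'))
    (h : ∀ t x, HasDerivAt (φ · x) (φ' t x) t) (t : ℝ) :
    HasDerivAt (fun t ↦ ∫ x, φ t x ∂μ) (∫ x, φ' t x ∂μ) t := by
  have hint {g : X → F} (hg : Continuous g) : Integrable g μ :=
    hg.integrable_of_hasCompactSupport (.of_compactSpace g)
  have hφ'c : ∀ t, Continuous (φ' t) := fun t ↦ hφ'.comp (by fun_prop : Continuous fun x ↦ (t, x))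
  obtain ⟨K, hK⟩ := ((isCompact_closedBall t 1).prod (isCompact_univ (X := X)))
    |>.exists_bound_of_continuousOn hφ'.continuousOn
  exact (hasDerivAt_integral_of_dominated_loc_of_deriv_le (closedBall_mem_nhds t one_pos)
    (.of_forall fun t ↦ (hint (hφ t)).aestronglyMeasurable) (hint (hφ t))
    (hint (hφ'c t)).aestronglyMeasurable
    (.of_forall fun x s hs ↦ hK (s, x) ⟨hs, mem_univ x⟩) (integrable_const K)
    (.of_forall fun x s _ ↦ h s x)).2

variable {E : Type*} [NormedAddCommGroup E] [InnerProductSpace ℝ E] [FiniteDimensional ℝ E]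
  [MeasurableSpace E] [BorelSpace E]

lemma integral_toSphere_comp_linearIsometryEquiv {F : Type*} [NormedAddCommGroup F]
    [NormedSpace ℝ F] (L : E ≃ₗᵢ[ℝ] E) (f : E → F) :
    ∫ ω, f (L (ω : sphere (0 : E) 1)) ∂volume.toSphere =
      ∫ ω, f (ω : sphere (0 : E) 1) ∂volume.toSphere := by
  have hval : MeasurableEmbedding ((↑) : sphere (0 : E) 1 → E) :=
    .subtype_coe isClosed_sphere.measurableSet
  have hL : MeasurableEmbedding fun ω : sphere (0 : E) 1 ↦ L ω :=
    L.toHomeomorph.measurableEmbedding.comp hval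
  have hmap : volume.toSphere.map (fun ω : sphere (0 : E) 1 ↦ L ω) =
      volume.toSphere.map ((↑) : sphere (0 : E) 1 → E) := by
    ext s hs
    have hcone : Ioo (0 : ℝ) 1 • (sphere 0 1 ∩ L ⁻¹' s) =
        L ⁻¹' (Ioo (0 : ℝ) 1 • (sphere 0 1 ∩ s)) := by
      ext x
      simp only [mem_smul, mem_preimage, mem_inter_iff, mem_sphere_zero_iff_norm]
      constructor
      · rintro ⟨t, ht, ω, ⟨hω, hωs⟩, rfl⟩
        exact ⟨t, ht, L ω, ⟨by simpa using hω, hωs⟩, by simp⟩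
      · rintro ⟨t, ht, ω, ⟨hω, hωs⟩, hx⟩
        exact ⟨t, ht, L.symm ω, ⟨by simpa using hω, by simpa using hωs⟩, by
          rw [← map_smul, hx, L.symm_apply_apply]⟩
    rw [hL.map_apply, hval.map_apply, Measure.toSphere_apply' _ (hL.measurable hs),
      Measure.toSphere_apply' _ (hval.measurable hs), Subtype.image_preimage_coe,
      show (fun ω : sphere (0 : E) 1 ↦ L ω) ⁻¹' s = (↑) ⁻¹' (L ⁻¹' s) from rfl,
      Subtype.image_preimage_coe, hcone,
      L.measurePreserving.measure_preimage_emb L.toHomeomorph.measurableEmbedding]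
  rw [← hval.integral_map, ← hmap, hL.integral_map]

lemma integral_toSphere_inner_eq_of_norm_eq {F : Type*} [NormedAddCommGroup F] [NormedSpace ℝ F]
    (g : ℝ → F) {x y : E} (h : ‖x‖ = ‖y‖) :
    ∫ ω : sphere (0 : E) 1, g ⟪x, ω⟫_ℝ ∂volume.toSphere =
      ∫ ω : sphere (0 : E) 1, g ⟪y, ω⟫_ℝ ∂volume.toSphere := by
  set L := (ℝ ∙ (x - y))ᗮ.reflection
  rw [← integral_toSphere_comp_linearIsometryEquiv L (fun ω ↦ g ⟪y, ω⟫_ℝ)]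
  simp only [← show L x = y from Submodule.reflection_sub h, LinearIsometryEquiv.inner_map_map]

-- The change of variables is the reflection fixing `cos (θ / 2) • e + sin (θ / 2) • u`.
lemma integral_toSphere_inner_rotate {F : Type*} [NormedAddCommGroup F] [NormedSpace ℝ F]
    (g : ℝ → ℝ → F) {e u : E} (he : ‖e‖ = 1) (hu : ‖u‖ = 1) (heu : ⟪e, u⟫_ℝ = 0) (θ : ℝ) :
    ∫ ω : sphere (0 : E) 1, g (cos θ * ⟪e, ω⟫_ℝ + sin θ * ⟪u, ω⟫_ℝ)
        (sin θ * ⟪e, ω⟫_ℝ - cos θ * ⟪u, ω⟫_ℝ) ∂volume.toSphere =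
      ∫ ω : sphere (0 : E) 1, g ⟪e, ω⟫_ℝ ⟪u, ω⟫_ℝ ∂volume.toSphere := by
  obtain ⟨φ, rfl⟩ : ∃ φ, θ = 2 * φ := ⟨θ / 2, by ring⟩
  have hue : ⟪u, e⟫_ℝ = 0 := by rw [real_inner_comm, heu]
  have hee : ⟪e, e⟫_ℝ = 1 := by rw [real_inner_self_eq_norm_sq, he, one_pow]
  have huu : ⟪u, u⟫_ℝ = 1 := by rw [real_inner_self_eq_norm_sq, hu, one_pow]
  set a := cos φ • e + sin φ • u with ha
  have hnorm : ‖a‖ ^ 2 = 1 := by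
    rw [← real_inner_self_eq_norm_sq, ha]
    simp only [inner_add_left, inner_add_right, real_inner_smul_left, real_inner_smul_right, hee,
      huu, heu, hue]
    linear_combination cos_sq_add_sin_sq φ
  rw [← integral_toSphere_comp_linearIsometryEquiv (ℝ ∙ a).reflection
    (fun ω ↦ g ⟪e, ω⟫_ℝ ⟪u, ω⟫_ℝ)]
  refine integral_congr_ae (.of_forall fun ω ↦ ?_)
  simp only [Submodule.reflection_singleton_apply, RCLike.ofReal_real_eq_id, id, hnorm, div_one]
  simp only [ha, inner_sub_right, inner_add_left, inner_add_right, real_inner_smul_left,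
    real_inner_smul_right, two_smul, hee, huu, heu, hue, cos_two_mul, sin_two_mul]
  congr 1
  · ring
  · linear_combination -(2 * ⟪u, (ω : E)⟫_ℝ) * cos_sq_add_sin_sq φ

/-- The integral of `cos (r ⟪e, ω⟫)` over the unit sphere. For a unit vector `e` it is, up to a
constant, the Bessel function `r ^ (1 - d / 2) * J_{d / 2 - 1}(r)`, where `d = dim E`. -/
def sphereCos (e : E) (r : ℝ) : ℝ :=
  ∫ ω : sphere (0 : E) 1, cos (r * ⟪e, ω⟫_ℝ) ∂volume.toSphere

lemma hasDerivAt_sphereCos (e : E) (r : ℝ) :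
    HasDerivAt (sphereCos e)
      (∫ ω : sphere (0 : E) 1, -(⟪e, ω⟫_ℝ * sin (r * ⟪e, ω⟫_ℝ)) ∂volume.toSphere) r := by
  refine hasDerivAt_integral_of_continuous (φ := fun r (ω : sphere (0 : E) 1) ↦ cos (r * ⟪e, ω⟫_ℝ))
    (φ' := fun r (ω : sphere (0 : E) 1) ↦ -(⟪e, ω⟫_ℝ * sin (r * ⟪e, ω⟫_ℝ)))
    (fun t ↦ by fun_prop) (by fun_prop) (fun t ω ↦ ?_) r
  exact (((hasDerivAt_id t).mul_const ⟪e, (ω : E)⟫_ℝ).cos).congr_deriv (by simp; ring)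

lemma hasDerivAt_integral_inner_mul_sin (e : E) (r : ℝ) :
    HasDerivAt (fun r ↦ ∫ ω : sphere (0 : E) 1, -(⟪e, ω⟫_ℝ * sin (r * ⟪e, ω⟫_ℝ)) ∂volume.toSphere)
      (∫ ω : sphere (0 : E) 1, -(⟪e, ω⟫_ℝ ^ 2 * cos (r * ⟪e, ω⟫_ℝ)) ∂volume.toSphere) r := by
  refine hasDerivAt_integral_of_continuous
    (φ := fun r (ω : sphere (0 : E) 1) ↦ -(⟪e, ω⟫_ℝ * sin (r * ⟪e, ω⟫_ℝ)))
    (φ' := fun r (ω : sphere (0 : E) 1) ↦ -(⟪e, ω⟫_ℝ ^ 2 * cos (r * ⟪e, ω⟫_ℝ)))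
    (fun t ↦ by fun_prop) (by fun_prop) (fun t ω ↦ ?_) r
  exact (((hasDerivAt_id t).mul_const ⟪e, (ω : E)⟫_ℝ).sin.const_mul ⟪e, (ω : E)⟫_ℝ).neg.congr_deriv
    (by simp; ring)

lemma integrable_toSphere_of_continuous {F : Type*} [NormedAddCommGroup F]
    [SecondCountableTopology F] {g : sphere (0 : E) 1 → F} (hg : Continuous g) :
    Integrable g volume.toSphere :=
  hg.integrable_of_hasCompactSupport (.of_compactSpace g)

-- Differentiate at `θ = 0` the rotation invariance of `∫ ⟪u, ω⟫ * sin (r * ⟪e, ω⟫)`.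
lemma integral_inner_mul_sin_eq {e u : E} (he : ‖e‖ = 1) (hu : ‖u‖ = 1) (heu : ⟪e, u⟫_ℝ = 0)
    (r : ℝ) :
    ∫ ω : sphere (0 : E) 1, ⟪e, ω⟫_ℝ * sin (r * ⟪e, ω⟫_ℝ) ∂volume.toSphere =
      r * ∫ ω : sphere (0 : E) 1, ⟪u, ω⟫_ℝ ^ 2 * cos (r * ⟪e, ω⟫_ℝ) ∂volume.toSphere := by
  let x : ℝ → E → ℝ := fun θ ω ↦ cos θ * ⟪e, ω⟫_ℝ + sin θ * ⟪u, ω⟫_ℝ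
  let y : ℝ → E → ℝ := fun θ ω ↦ sin θ * ⟪e, ω⟫_ℝ - cos θ * ⟪u, ω⟫_ℝ
  have hx (ω : E) (θ : ℝ) : HasDerivAt (x · ω) (-y θ ω) θ :=
    (((hasDerivAt_cos θ).mul_const _).add ((hasDerivAt_sin θ).mul_const _)).congr_deriv
      (by simp only [y]; ring)
  have hy (ω : E) (θ : ℝ) : HasDerivAt (y · ω) (x θ ω) θ :=
    (((hasDerivAt_sin θ).mul_const _).sub ((hasDerivAt_cos θ).mul_const _)).congr_deriv
      (by simp only [x]; ring)
  have hderiv := hasDerivAt_integral_of_continuous (μ := (volume : Measure E).toSphere)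
    (φ := fun θ (ω : sphere (0 : E) 1) ↦ y θ ω * sin (r * x θ ω))
    (φ' := fun θ (ω : sphere (0 : E) 1) ↦
      x θ ω * sin (r * x θ ω) + y θ ω * (cos (r * x θ ω) * (r * -y θ ω)))
    (fun θ ↦ by fun_prop) (by fun_prop)
    (fun θ ω ↦ (hy ω θ).mul ((hx ω θ).const_mul r).sin) 0
  have hconst (θ : ℝ) := integral_toSphere_inner_rotate (fun x y ↦ y * sin (r * x)) he hu heu θ
  have hzero := hderiv.unique (by simpa only [x, y, hconst] using hasDerivAt_const (0 : ℝ) _)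
  rw [← sub_eq_zero, ← integral_const_mul, ← integral_sub
    (integrable_toSphere_of_continuous (by fun_prop))
    (integrable_toSphere_of_continuous (by fun_prop)), ← hzero]
  refine integral_congr_ae (.of_forall fun ω ↦ ?_)
  simp only [x, y, cos_zero, sin_zero]
  ring_nf

lemma sphereCos_ode {e : E} (he : ‖e‖ = 1) (r : ℝ) :
    r * ∫ ω : sphere (0 : E) 1, -(⟪e, ω⟫_ℝ ^ 2 * cos (r * ⟪e, ω⟫_ℝ)) ∂volume.toSphere =
      -(r * sphereCos e r) - (Module.finrank ℝ E - 1) *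
        ∫ ω : sphere (0 : E) 1, -(⟪e, ω⟫_ℝ * sin (r * ⟪e, ω⟫_ℝ)) ∂volume.toSphere := by
  classical
  obtain ⟨v, b, hev, hb⟩ := (orthonormal_subsingleton_iff (𝕜 := ℝ) (ι := ({e} : Set E))
    (v := Subtype.val) |>.2 fun x ↦ by rw [x.2, he]).exists_orthonormalBasis_extension
  have hbe (i : v) : b i = i := congr_fun hb i
  set i : v := ⟨e, hev rfl⟩
  set S := ∫ ω : sphere (0 : E) 1, ⟪e, ω⟫_ℝ * sin (r * ⟪e, ω⟫_ℝ) ∂volume.toSphere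
  set T : v → ℝ := fun j ↦
    ∫ ω : sphere (0 : E) 1, ⟪(j : E), ω⟫_ℝ ^ 2 * cos (r * ⟪e, ω⟫_ℝ) ∂volume.toSphere
  have hT : ∀ j ∈ Finset.univ.erase i, r * T j = S := fun j hj ↦
    (integral_inner_mul_sin_eq he (by rw [← hbe, b.norm_eq_one])
      (by rw [← hbe j, show e = b i from (hbe i).symm,
        b.inner_eq_zero (Finset.ne_of_mem_erase hj).symm]) r).symm
  have hsum : sphereCos e r = ∑ j, T j := by
    rw [← integral_finsetSum _ fun j _ ↦ integrable_toSphere_of_continuous (by fun_prop), sphereCos]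
    refine integral_congr_ae (.of_forall fun ω ↦ ?_)
    have hω := b.sum_sq_norm_inner_right (ω : E)
    simp only [norm_eq_of_mem_sphere, one_pow, hbe, norm_eq_abs, sq_abs] at hω
    simp only [← Finset.sum_mul, hω, one_mul]
  have hcard : ((Finset.univ.erase i).card : ℝ) = Module.finrank ℝ E - 1 := by
    rw [Finset.card_erase_of_mem (Finset.mem_univ i), Finset.card_univ,
      Nat.cast_pred (Fintype.card_pos_iff.2 ⟨i⟩), Module.finrank_eq_card_basis b.toBasis]
  rw [hsum, ← Finset.add_sum_erase _ _ (Finset.mem_univ i), mul_add, Finset.mul_sum,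
    Finset.sum_congr rfl hT, Finset.sum_const, nsmul_eq_mul, hcard, integral_neg, integral_neg]
  ring

lemma abs_sphereCos_le (e : E) (r : ℝ) :
    |sphereCos e r| ≤ (volume : Measure E).toSphere.real univ := by
  simpa [sphereCos] using norm_integral_le_of_norm_le_const (μ := (volume : Measure E).toSphere)
    (C := 1) (f := fun ω ↦ cos (r * ⟪e, ω⟫_ℝ)) (.of_forall fun ω ↦ abs_cos_le_one _)

lemma continuous_sphereCos (e : E) : Continuous (sphereCos e) :=
  continuous_iff_continuousAt.2 fun r ↦ (hasDerivAt_sphereCos e r).continuousAt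

/-- The normalized kernel `z ^ ((d - 1) / 2) * sphereCos e z`, with `d = dim E`, which carries the
square root of the Jacobian of polar coordinates and stays bounded at infinity. -/
def sphereKernel (e : E) (z : ℝ) : ℝ :=
  z ^ (((Module.finrank ℝ E : ℝ) - 1) / 2) * sphereCos e z

lemma exists_hasDerivAt_sphereKernel {e : E} (he : ‖e‖ = 1) :
    ∃ κ : ℝ, ∃ w' : ℝ → ℝ, (∀ z > 0, HasDerivAt (sphereKernel e) (w' z) z) ∧
      ∀ z > 0, HasDerivAt w' (κ * sphereKernel e z / z ^ 2 - sphereKernel e z) z := by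
  set p : ℝ := ((Module.finrank ℝ E : ℝ) - 1) / 2 with hp
  have hd : (Module.finrank ℝ E : ℝ) - 1 = 2 * p := by rw [hp]; ring
  set u : ℝ → ℝ := fun r ↦
    ∫ ω : sphere (0 : E) 1, -(⟪e, ω⟫_ℝ * sin (r * ⟪e, ω⟫_ℝ)) ∂volume.toSphere
  refine ⟨p * (p - 1), fun z ↦ p * z ^ (p - 1) * sphereCos e z + z ^ p * u z, fun z hz ↦
    (hasDerivAt_rpow_const (.inl hz.ne')).mul (hasDerivAt_sphereCos e z), fun z hz ↦ ?_⟩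
  refine ((((hasDerivAt_rpow_const (p := p - 1) (.inl hz.ne')).const_mul p).mul
    (hasDerivAt_sphereCos e z)).add ((hasDerivAt_rpow_const (p := p) (.inl hz.ne')).mul
    (hasDerivAt_integral_inner_mul_sin e z))).congr_deriv ?_
  have hode := sphereCos_ode he z
  rw [hd] at hode
  rw [sphereKernel, ← hp, rpow_sub_one hz.ne', rpow_sub_one hz.ne']
  field_simp
  linear_combination z * hode

-- The energy of `w'' = κ w / z² - w` controls the kernel at infinity; near zero it is bounded.
lemma exists_norm_sphereKernel_sub_exp_le {e : E} (he : ‖e‖ = 1) :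
    ∃ A B : ℂ, ∃ D : ℝ, ∀ z > 0,
      ‖(sphereKernel e z : ℂ) -
        (A * Complex.exp (Complex.I * z) + B * Complex.exp (-(Complex.I * z)))‖ ≤
        D * min 1 z⁻¹ := by
  obtain ⟨κ, w', hw, hw'⟩ := exists_hasDerivAt_sphereKernel he
  obtain ⟨A, B, D, h⟩ := exists_norm_sub_exp_le_div hw hw'
  set V := (volume : Measure E).toSphere.real univ
  have hdim : 1 ≤ (Module.finrank ℝ E : ℝ) := by
    have : Nontrivial E := ⟨e, 0, by rintro rfl; simp at he⟩
    exact_mod_cast Module.finrank_pos (R := ℝ) (M := E)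
  refine ⟨A, B, max D (V + (‖A‖ + ‖B‖)), fun z hz ↦ ?_⟩
  rcases le_total 1 z with h1 | h1
  · rw [min_eq_right (inv_le_one_of_one_le₀ h1), ← div_eq_mul_inv]
    exact (h z h1).trans (by gcongr; exact le_max_left _ _)
  · have hkernel : ‖(sphereKernel e z : ℂ)‖ ≤ V := by
      rw [Complex.norm_real, norm_eq_abs, sphereKernel, abs_mul,
        abs_of_nonneg (rpow_nonneg hz.le _)]
      exact (mul_le_of_le_one_left (abs_nonneg _) (rpow_le_one hz.le h1 (by linarith))).trans
        (abs_sphereCos_le e z)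
    have hexp : ‖A * Complex.exp (Complex.I * z) + B * Complex.exp (-(Complex.I * z))‖ ≤
        ‖A‖ + ‖B‖ := by
      refine (norm_add_le _ _).trans_eq ?_
      rw [norm_mul, norm_mul, Complex.norm_exp_I_mul_ofReal, norm_exp_neg_I_mul_ofReal,
        mul_one, mul_one]
    rw [min_eq_left ((one_le_inv₀ hz).2 h1), mul_one]
    exact ((norm_sub_le _ _).trans (add_le_add hkernel hexp)).trans (le_max_right _ _)

end SphereIntegral

/-! ### Polar coordinates and the Fourier transform of radial functions -/

section Polar

open Set Metric

variable {E : Type*} [NormedAddCommGroup E] [NormedSpace ℝ E] [FiniteDimensional ℝ E]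
  [MeasurableSpace E] [BorelSpace E] [Nontrivial E] (μ : Measure E) [μ.IsAddHaarMeasure]

lemma integral_eq_integral_polar {F : Type*} [NormedAddCommGroup F] [NormedSpace ℝ F]
    {H : E → F} (hH : Integrable H μ) :
    ∫ x, H x ∂μ = ∫ ρ in Ioi (0 : ℝ), ρ ^ (Module.finrank ℝ E - 1) •
      ∫ ω : sphere (0 : E) 1, H (ρ • (ω : E)) ∂μ.toSphere := by
  have hmp := μ.measurePreserving_homeomorphUnitSphereProd
  have hemb := (homeomorphUnitSphereProd E).measurableEmbedding
  have hs : MeasurableSet ({0}ᶜ : Set E) := (measurableSet_singleton 0).compl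
  set P : sphere (0 : E) 1 × Ioi (0 : ℝ) → F := fun q ↦ H (q.2.1 • q.1.1)
  have hP : P ∘ homeomorphUnitSphereProd E = H ∘ Subtype.val := by
    ext x
    simp [P, smul_inv_smul₀ (norm_ne_zero_iff.2 x.2)]
  have hPint : Integrable P (μ.toSphere.prod (.volumeIoiPow (Module.finrank ℝ E - 1))) := by
    rw [← hmp.integrable_comp_emb hemb, hP, ← integrableOn_iff_comap_subtypeVal hs]
    exact hH.integrableOn
  calc ∫ x, H x ∂μ = ∫ x : ({0}ᶜ : Set E), H x ∂μ.comap (↑) := by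
        rw [integral_subtype_comap hs, restrict_compl_singleton]
    _ = ∫ q, P q ∂μ.toSphere.prod (.volumeIoiPow (Module.finrank ℝ E - 1)) := by
        rw [← hmp.integral_comp hemb]
        exact integral_congr_ae (.of_forall fun x ↦ (congrFun hP x).symm)
    _ = ∫ ρ : Ioi (0 : ℝ), ∫ ω : sphere (0 : E) 1, H (ρ.1 • (ω : E)) ∂μ.toSphere
          ∂.volumeIoiPow (Module.finrank ℝ E - 1) := integral_prod_symm _ hPint
    _ = _ := by
        simp only [Measure.volumeIoiPow, ENNReal.ofReal]
        rw [integral_withDensity_eq_integral_smul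
          (measurable_subtype_coe.pow_const _).real_toNNReal]
        refine (integral_subtype_comap measurableSet_Ioi fun ρ : ℝ ↦
          (ρ ^ (Module.finrank ℝ E - 1)).toNNReal •
            ∫ ω : sphere (0 : E) 1, H (ρ • (ω : E)) ∂μ.toSphere).trans ?_
        refine setIntegral_congr_fun measurableSet_Ioi fun ρ hρ ↦ ?_
        rw [NNReal.smul_def, coe_toNNReal _ (pow_nonneg hρ.out.le _)]

lemma lintegral_fun_norm_eq_mul_lintegral {h : ℝ → ℝ≥0∞} (hh : Measurable h) :
    ∫⁻ x, h ‖x‖ ∂μ = μ.toSphere univ *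
      ∫⁻ ρ in Ioi (0 : ℝ), ENNReal.ofReal (ρ ^ (Module.finrank ℝ E - 1)) * h ρ := by
  calc ∫⁻ x, h ‖x‖ ∂μ = ∫⁻ x : ({0}ᶜ : Set E), h ‖(x : E)‖ ∂μ.comap (↑) := by
        rw [lintegral_subtype_comap (measurableSet_singleton (0 : E)).compl (fun x ↦ h ‖x‖),
          restrict_compl_singleton]
    _ = ∫⁻ q, h q.2 ∂μ.toSphere.prod (.volumeIoiPow (Module.finrank ℝ E - 1)) := by
        rw [← μ.measurePreserving_homeomorphUnitSphereProd.lintegral_comp (by fun_prop)]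
        simp only [homeomorphUnitSphereProd_apply_snd_coe]
    _ = μ.toSphere univ * ∫⁻ ρ : Ioi (0 : ℝ), h ρ ∂.volumeIoiPow (Module.finrank ℝ E - 1) := by
        rw [lintegral_prod_symm _ (by fun_prop)]
        simp only [lintegral_const]
        rw [lintegral_mul_const _ (by fun_prop), mul_comm]
    _ = _ := by
        rw [Measure.volumeIoiPow,
          lintegral_withDensity_eq_lintegral_mul _ (by fun_prop) (by fun_prop)]
        exact congrArg _ (lintegral_subtype_comap measurableSet_Ioi
          fun ρ ↦ ENNReal.ofReal (ρ ^ (Module.finrank ℝ E - 1)) * h ρ)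

lemma setLIntegral_ball_fun_norm_eq_mul_lintegral {h : ℝ → ℝ≥0∞} (hh : Measurable h) (R : ℝ) :
    ∫⁻ x in ball 0 R, h ‖x‖ ∂μ = μ.toSphere univ *
      ∫⁻ ρ in Ioo (0 : ℝ) R, ENNReal.ofReal (ρ ^ (Module.finrank ℝ E - 1)) * h ρ := by
  have hball : (ball (0 : E) R).indicator (fun x ↦ h ‖x‖) = fun x ↦ (Iio R).indicator h ‖x‖ := by
    ext x
    rw [ball_zero_eq]
    exact indicator_comp_right (s := Iio R) (g := h) fun x : E ↦ ‖x‖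
  rw [← lintegral_indicator isOpen_ball.measurableSet, hball,
    lintegral_fun_norm_eq_mul_lintegral μ (hh.indicator measurableSet_Iio)]
  have hmul (ρ : ℝ) := indicator_mul_right (i := ρ) (Iio R)
    (fun ρ ↦ ENNReal.ofReal (ρ ^ (Module.finrank ℝ E - 1))) h
  simp only [← hmul]
  rw [setLIntegral_indicator measurableSet_Iio, Iio_inter_Ioi]

end Polar

section RadialFourier

open Set Metric

variable {E : Type*} [NormedAddCommGroup E] [InnerProductSpace ℝ E] [FiniteDimensional ℝ E]
  {e : E}

/-- The restriction of a function to the ray spanned by `e`, weighted by the square root of the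
Jacobian of polar coordinates. -/
def radialProfile (e : E) (G : E → ℂ) (ρ : ℝ) : ℂ :=
  (ρ ^ (((Module.finrank ℝ E : ℝ) - 1) / 2) : ℝ) * G (ρ • e)

lemma rpow_half_finrank_sub_one_sq [Nontrivial E] {ρ : ℝ} (hρ : 0 ≤ ρ) :
    (ρ ^ (((Module.finrank ℝ E : ℝ) - 1) / 2)) ^ 2 = ρ ^ (Module.finrank ℝ E - 1) := by
  rw [← rpow_natCast, ← rpow_mul hρ, ← rpow_natCast, Nat.cast_pred Module.finrank_pos]
  congr 1
  push_cast
  ring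

variable [MeasurableSpace E] [BorelSpace E]

lemma integral_exp_inner_toSphere (he : ‖e‖ = 1) (x : E) :
    ∫ ω : sphere (0 : E) 1, Complex.exp (Complex.I * ⟪x, ω⟫_ℝ) ∂volume.toSphere =
      sphereCos e ‖x‖ := by
  have hint {z : E} : Integrable (fun ω : sphere (0 : E) 1 ↦ Complex.exp (Complex.I * ⟪z, ω⟫_ℝ))
      volume.toSphere := integrable_toSphere_of_continuous (by fun_prop)
  have hneg := integral_toSphere_inner_eq_of_norm_eq (fun u ↦ Complex.exp (Complex.I * u))
    (norm_neg x)
  have hcos : ∫ ω : sphere (0 : E) 1, Complex.exp (Complex.I * ⟪x, ω⟫_ℝ) ∂volume.toSphere =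
      ∫ ω : sphere (0 : E) 1, (cos ⟪x, ω⟫_ℝ : ℂ) ∂volume.toSphere := by
    refine mul_left_cancel₀ (two_ne_zero (α := ℂ)) ?_
    nth_rewrite 1 [two_mul, ← hneg]
    rw [← integral_add hint hint, ← integral_const_mul]
    refine integral_congr_ae (.of_forall fun ω ↦ ?_)
    simp only [inner_neg_left, Complex.ofReal_neg, Complex.ofReal_cos]
    rw [Complex.two_cos, add_comm, neg_mul, mul_neg, mul_comm Complex.I]
  rw [hcos, integral_complex_ofReal, integral_toSphere_inner_eq_of_norm_eq cos
    (show ‖x‖ = ‖‖x‖ • e‖ by rw [norm_smul, norm_norm, he, mul_one]), sphereCos]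
  simp only [real_inner_smul_left]

lemma integral_exp_inner_mul_of_radial (he : ‖e‖ = 1) {H : E → ℂ} (hH : Integrable H)
    (hrad : ∀ ξ η : E, ‖ξ‖ = ‖η‖ → H ξ = H η) {x : E} (hx : x ≠ 0) :
    ∫ ξ, Complex.exp (Complex.I * ⟪x, ξ⟫_ℝ) * H ξ =
      ((‖x‖ ^ (((Module.finrank ℝ E : ℝ) - 1) / 2))⁻¹ : ℝ) *
        ∫ ρ in Ioi (0 : ℝ), sphereKernel e (‖x‖ * ρ) * radialProfile e H ρ := by
  have : Nontrivial E := ⟨x, 0, hx⟩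
  have hnorm : 0 < ‖x‖ := norm_pos_iff.2 hx
  have hint : Integrable fun ξ ↦ Complex.exp (Complex.I * ⟪x, ξ⟫_ℝ) * H ξ :=
    hH.bdd_mul (c := 1) (by fun_prop)
      (.of_forall fun ξ ↦ (Complex.norm_exp_I_mul_ofReal _).le)
  rw [integral_eq_integral_polar volume hint, ← integral_const_mul]
  refine setIntegral_congr_fun measurableSet_Ioi fun ρ (hρ : 0 < ρ) ↦ ?_
  have hsphere : ∫ ω : sphere (0 : E) 1,
      Complex.exp (Complex.I * ⟪x, ρ • (ω : E)⟫_ℝ) * H (ρ • (ω : E)) ∂volume.toSphere =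
        sphereCos e (‖x‖ * ρ) * H (ρ • e) := by
    rw [show ‖x‖ * ρ = ‖ρ • x‖ by rw [norm_smul, norm_of_nonneg hρ.le, mul_comm],
      ← integral_exp_inner_toSphere he, ← integral_mul_const]
    refine integral_congr_ae (.of_forall fun ω ↦ ?_)
    simp only [real_inner_smul_left, real_inner_smul_right,
      hrad (ρ • (ω : E)) (ρ • e) (by simp only [norm_smul, norm_eq_of_mem_sphere, he])]
  set p := ((Module.finrank ℝ E : ℝ) - 1) / 2 with hp
  have hpow : ρ ^ (Module.finrank ℝ E - 1) = (‖x‖ ^ p)⁻¹ * ((‖x‖ * ρ) ^ p * ρ ^ p) := by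
    rw [mul_rpow hnorm.le hρ.le, mul_assoc, inv_mul_cancel_left₀ (by positivity), ← sq, hp,
      rpow_half_finrank_sub_one_sq hρ.le]
  simp only [hsphere, sphereKernel, radialProfile, ← hp, hpow, Complex.real_smul]
  push_cast
  ring

omit [MeasurableSpace E] [BorelSpace E] in
lemma continuous_radialProfile [Nontrivial E] (e : E) {G : E → ℂ} (hG : Continuous G) :
    Continuous (radialProfile e G) := by
  have : (1 : ℝ) ≤ Module.finrank ℝ E := by exact_mod_cast Module.finrank_pos (R := ℝ) (M := E)
  have := continuous_rpow_const (q := ((Module.finrank ℝ E : ℝ) - 1) / 2) (by linarith)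
  unfold radialProfile
  fun_prop

omit [MeasurableSpace E] [BorelSpace E] in
lemma integrableOn_radialProfile [Nontrivial E] (he : ‖e‖ = 1) (G : SchwartzMap E ℂ) :
    IntegrableOn (radialProfile e G) (Ioi 0) := by
  have hm := Module.finrank_pos (R := ℝ) (M := E)
  set m := Module.finrank ℝ E with hdim
  have hm' : (1 : ℝ) ≤ m := by exact_mod_cast hm
  let ι := LinearIsometry.toSpanSingleton ℝ E he
  let g : SchwartzMap ℝ ℂ := SchwartzMap.compCLMOfAntilipschitz ℂ
    ι.toContinuousLinearMap.hasTemperateGrowth ι.antilipschitz G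
  have hbound : Integrable fun ρ : ℝ ↦ ‖g ρ‖ + ‖ρ‖ ^ m * ‖g ρ‖ :=
    g.integrable.norm.add (g.integrable_pow_mul volume m)
  refine hbound.integrableOn.mono' (continuous_radialProfile e G.continuous).aestronglyMeasurable
    ((ae_restrict_mem measurableSet_Ioi).mono fun ρ (hρ : 0 < ρ) ↦ ?_)
  have hpow : ρ ^ (((m : ℝ) - 1) / 2) ≤ 1 + ρ ^ m := by
    rcases le_total ρ 1 with h | h
    · exact (rpow_le_one hρ.le h (by linarith)).trans (le_add_of_nonneg_right (by positivity))
    · rw [← rpow_natCast ρ m]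
      exact (rpow_le_rpow_of_exponent_le h (by linarith)).trans (le_add_of_nonneg_left zero_le_one)
  rw [radialProfile, norm_mul, Complex.norm_real, norm_of_nonneg (by positivity), ← hdim,
    norm_of_nonneg hρ.le, ← one_add_mul]
  exact mul_le_mul_of_nonneg_right hpow (norm_nonneg _)

lemma integrable_rpow_mul_sq_norm_schwartzMap (G : SchwartzMap E ℂ) (s : ℝ) :
    Integrable fun ξ ↦ (1 + ‖ξ‖ ^ 2) ^ s * ‖G ξ‖ ^ 2 := by
  have hw := Function.hasTemperateGrowth_one_add_norm_sq_rpow E (s / 2)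
  refine ((SchwartzMap.smulLeftCLM ℂ (fun ξ : E ↦ (1 + ‖ξ‖ ^ 2) ^ (s / 2)) G).memLp 2
    |>.integrable_norm_pow two_ne_zero).congr (.of_forall fun ξ ↦ ?_)
  simp only [SchwartzMap.smulLeftCLM_apply_apply hw, norm_smul, mul_pow]
  rw [norm_of_nonneg (by positivity), ← rpow_mul_natCast (by positivity)]
  norm_num

end RadialFourier

section FT

variable {n : ℕ}

lemma FT_eq_of_norm_eq {f : EuclideanSpace ℝ (Fin n) → ℂ}
    (hf : ∀ x y : EuclideanSpace ℝ (Fin n), ‖x‖ = ‖y‖ → f x = f y)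
    {ξ η : EuclideanSpace ℝ (Fin n)} (h : ‖ξ‖ = ‖η‖) : FT n f ξ = FT n f η := by
  let L := (ℝ ∙ (ξ - η))ᗮ.reflection
  have hL : L ξ = η := Submodule.reflection_sub h
  unfold FT
  rw [← L.measurePreserving.integral_comp L.toHomeomorph.measurableEmbedding
    (fun x ↦ Complex.exp (-(Complex.I * ((⟪x, η⟫_ℝ : ℝ) : ℂ))) * f x)]
  refine integral_congr_ae (.of_forall fun x ↦ ?_)
  simp only [← hL, LinearIsometryEquiv.inner_map_map, hf (L x) x (L.norm_map x)]

open FourierTransform in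
lemma exists_schwartzMap_eq_FT (f : SchwartzMap (EuclideanSpace ℝ (Fin n)) ℂ) :
    ∃ G : SchwartzMap (EuclideanSpace ℝ (Fin n)) ℂ, FT n f = G := by
  let δ : EuclideanSpace ℝ (Fin n) ≃L[ℝ] EuclideanSpace ℝ (Fin n) :=
    .smulLeft (Units.mk0 (2 * π)⁻¹ (by positivity))
  refine ⟨SchwartzMap.compCLMOfContinuousLinearEquiv ℂ δ (𝓕 f), funext fun ξ ↦ ?_⟩
  rw [SchwartzMap.compCLMOfContinuousLinearEquiv_apply, Function.comp_apply,
    SchwartzMap.fourier_coe, Real.fourier_eq']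
  refine integral_congr_ae (.of_forall fun x ↦ ?_)
  have hδ : δ ξ = (2 * π)⁻¹ • ξ := rfl
  have hphase : -2 * π * ⟪x, (2 * π)⁻¹ • ξ⟫_ℝ = -⟪x, ξ⟫_ℝ := by
    rw [real_inner_smul_right]
    field_simp
  simp only [hδ, hphase, smul_eq_mul]
  rw [Complex.ofReal_neg, neg_mul, mul_comm Complex.I]

end FT

/-! ### Linearization of the maximal function -/

section Linearization

variable {X T : Type*} [MeasurableSpace X] [MeasurableSpace T] {Ψ : X → T → ℝ≥0∞} {q : ℕ → T}

lemma exists_measurable_forall_le (hΨ : ∀ k, Measurable (Ψ · (q k))) (N : ℕ) :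
    ∃ τ : X → T, Measurable τ ∧ Measurable (fun x ↦ Ψ x (τ x)) ∧
      ∀ x, ∀ k ≤ N, Ψ x (q k) ≤ Ψ x (τ x) := by
  classical
  induction N with
  | zero =>
    refine ⟨fun _ ↦ q 0, measurable_const, hΨ 0, fun x k hk ↦ ?_⟩
    rw [Nat.le_zero.1 hk]
  | succ N ih =>
    obtain ⟨τ, hτ, hΨτ, hle⟩ := ih
    have hS := measurableSet_le hΨτ (hΨ (N + 1))
    let τ' : X → T := fun x ↦ if Ψ x (τ x) ≤ Ψ x (q (N + 1)) then q (N + 1) else τ x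
    have hmax : (fun x ↦ Ψ x (τ' x)) = fun x ↦ max (Ψ x (τ x)) (Ψ x (q (N + 1))) := by
      ext x
      simp only [τ', max_def, apply_ite (Ψ x)]
    refine ⟨τ', .ite hS measurable_const hτ, hmax ▸ hΨτ.max (hΨ (N + 1)), fun x k hk ↦ ?_⟩
    rw [congrFun hmax x]
    rcases Nat.le_succ_iff.1 hk with hk | rfl
    · exact (hle x k hk).trans (le_max_left _ _)
    · exact le_max_right _ _

lemma lintegral_iSup_le_of_forall_measurable {μ : Measure X} {M : ℝ≥0∞}
    (hΨ : ∀ k, Measurable (Ψ · (q k)))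
    (hM : ∀ τ : X → T, Measurable τ → ∫⁻ x, Ψ x (τ x) ∂μ ≤ M) :
    ∫⁻ x, ⨆ k, Ψ x (q k) ∂μ ≤ M := by
  have hpartial (x : X) : ⨆ k, Ψ x (q k) = ⨆ N, partialSups (fun k ↦ Ψ x (q k)) N :=
    (iSup_partialSups_eq _).symm
  simp only [hpartial]
  rw [lintegral_iSup]
  · refine iSup_le fun N ↦ ?_
    obtain ⟨τ, hτ, -, hle⟩ := exists_measurable_forall_le hΨ N
    exact (lintegral_mono fun x ↦ partialSups_le _ _ _ (hle x)).trans (hM τ hτ)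
  · intro N
    simp only [partialSups_apply]
    fun_prop
  · exact fun N N' h x ↦ (partialSups _).monotone h

end Linearization

lemma iSup_eq_iSup_denseSeq {T : Type*} [TopologicalSpace T] [TopologicalSpace.SeparableSpace T]
    [Nonempty T] {f : T → ℝ≥0∞} (hf : Continuous f) :
    ⨆ t, f t = ⨆ k, f (TopologicalSpace.denseSeq T k) := by
  rw [← (TopologicalSpace.denseRange_denseSeq T).ciSup hf (OrderTop.bddAbove _), iSup_range']

/-! ### The oscillatory integral of a radial function -/

section RadialOsc

open Set Metric
open scoped NNReal

variable {E : Type*} [NormedAddCommGroup E] [InnerProductSpace ℝ E] [FiniteDimensional ℝ E]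
  [MeasurableSpace E] [BorelSpace E] {e : E} {a : ℝ} {g : ℝ → ℂ}

/-- The one-dimensional oscillatory integral to which `S^a f` reduces for radial `f`: the variable
`r` stands for `‖x‖`, and `g` for the radial profile of the Fourier transform of `f`. -/
def radialOsc (a : ℝ) (e : E) (g : ℝ → ℂ) (r t : ℝ) : ℂ :=
  ∫ ρ in Ioi (0 : ℝ), sphereKernel e (r * ρ) *
    (Complex.exp (Complex.I * (t * ρ ^ a : ℝ)) * g ρ)

lemma measurable_sphereKernel (e : E) : Measurable (sphereKernel e) := by
  have := (continuous_sphereCos e).measurable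
  unfold sphereKernel
  fun_prop

lemma exists_norm_sphereKernel_le (he : ‖e‖ = 1) :
    ∃ K, ∀ z > 0, ‖(sphereKernel e z : ℂ)‖ ≤ K := by
  obtain ⟨A, B, D, hD⟩ := exists_norm_sphereKernel_sub_exp_le he
  refine ⟨|D| + (‖A‖ + ‖B‖), fun z hz ↦ ?_⟩
  have hmin : |min 1 z⁻¹| ≤ 1 := by
    rw [abs_of_nonneg (by positivity)]
    exact min_le_left _ _
  have hexp : ‖A * Complex.exp (Complex.I * z) + B * Complex.exp (-(Complex.I * z))‖ ≤
      ‖A‖ + ‖B‖ := by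
    refine (norm_add_le _ _).trans_eq ?_
    rw [norm_mul, norm_mul, Complex.norm_exp_I_mul_ofReal, norm_exp_neg_I_mul_ofReal, mul_one,
      mul_one]
  calc ‖(sphereKernel e z : ℂ)‖ ≤ D * min 1 z⁻¹ + (‖A‖ + ‖B‖) :=
        (norm_le_norm_sub_add _ _).trans (add_le_add (hD z hz) hexp)
    _ ≤ |D| + (‖A‖ + ‖B‖) := by
        gcongr
        exact (le_abs_self _).trans (abs_mul D _ ▸ mul_le_of_le_one_right (abs_nonneg D) hmin)

lemma integrableOn_sphereKernel_mul (he : ‖e‖ = 1) (hg : IntegrableOn g (Ioi 0)) {r : ℝ}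
    (hr : 0 < r) (t : ℝ) :
    IntegrableOn (fun ρ : ℝ ↦ sphereKernel e (r * ρ) *
      (Complex.exp (Complex.I * (t * ρ ^ a : ℝ)) * g ρ)) (Ioi 0) := by
  obtain ⟨K, hK⟩ := exists_norm_sphereKernel_le he
  have := measurable_sphereKernel e
  refine Integrable.bdd_mul (c := K) (Integrable.bdd_mul (c := 1) hg ?_ ?_) ?_ ?_
  · exact Measurable.aestronglyMeasurable (by fun_prop)
  · exact .of_forall fun ρ ↦ (Complex.norm_exp_I_mul_ofReal _).le
  · exact Measurable.aestronglyMeasurable (by fun_prop)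
  · exact (ae_restrict_mem measurableSet_Ioi).mono fun ρ (hρ : 0 < ρ) ↦ hK _ (mul_pos hr hρ)

lemma continuous_radialOsc (he : ‖e‖ = 1) (hg : IntegrableOn g (Ioi 0)) {r : ℝ} (hr : 0 < r) :
    Continuous (radialOsc a e g r) := by
  obtain ⟨K, hK⟩ := exists_norm_sphereKernel_le he
  refine continuous_of_dominated (bound := fun ρ ↦ K * ‖g ρ‖)
    (fun t ↦ (integrableOn_sphereKernel_mul he hg hr t).aestronglyMeasurable) (fun t ↦ ?_)
    (hg.norm.const_mul K) (.of_forall fun ρ ↦ by fun_prop)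
  refine (ae_restrict_mem measurableSet_Ioi).mono fun ρ (hρ : 0 < ρ) ↦ ?_
  rw [norm_mul, norm_mul, Complex.norm_exp_I_mul_ofReal, one_mul]
  exact mul_le_mul_of_nonneg_right (hK _ (mul_pos hr hρ)) (norm_nonneg _)

lemma measurable_radialOsc (a : ℝ) (e : E) (hg : Measurable g) (t : ℝ) :
    Measurable fun r ↦ radialOsc a e g r t := by
  have := measurable_sphereKernel e
  have hF : Measurable (Function.uncurry fun r ρ : ℝ ↦ (sphereKernel e (r * ρ) : ℂ) *
      (Complex.exp (Complex.I * (t * ρ ^ a : ℝ)) * g ρ)) := by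
    unfold Function.uncurry
    fun_prop
  exact hF.stronglyMeasurable.integral_prod_right.measurable

lemma osc_eq_exp_mul_exp (a κ : ℝ) (τ : ℝ → ℝ) (r ρ : ℝ) :
    osc a κ τ r ρ = Complex.exp (κ * (Complex.I * (r * ρ : ℝ))) *
      Complex.exp (Complex.I * (τ r * ρ ^ a : ℝ)) := by
  rw [osc, ← Complex.exp_add]
  push_cast
  ring_nf

lemma enorm_radialOsc_sub_le (he : ‖e‖ = 1) {A B : ℂ} {D : ℝ}
    (hD : ∀ z > 0, ‖(sphereKernel e z : ℂ) -
      (A * Complex.exp (Complex.I * z) + B * Complex.exp (-(Complex.I * z)))‖ ≤ D * min 1 z⁻¹)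
    {τ : ℝ → ℝ} (hτ : Measurable τ) (hg : IntegrableOn g (Ioi 0)) {r : ℝ} (hr : 0 < r) :
    ‖radialOsc a e g r (τ r) - (A * (∫ ρ in Ioi 0, osc a 1 τ r ρ * g ρ) +
        B * ∫ ρ in Ioi 0, osc a (-1) τ r ρ * g ρ)‖ₑ ≤
      ENNReal.ofReal D * ∫⁻ ρ in Ioi (0 : ℝ), ENNReal.ofReal (min 1 (r * ρ)⁻¹) * ‖g ρ‖ₑ := by
  have hA := (integrableOn_osc_mul (a := a) (κ := 1) hτ hg r).const_mul A
  have hB := (integrableOn_osc_mul (a := a) (κ := -1) hτ hg r).const_mul B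
  have hAB : IntegrableOn (fun ρ ↦ A * (osc a 1 τ r ρ * g ρ) + B * (osc a (-1) τ r ρ * g ρ))
      (Ioi 0) := hA.add hB
  rw [radialOsc, ← integral_const_mul, ← integral_const_mul, ← integral_add hA hB,
    ← integral_sub (integrableOn_sphereKernel_mul he hg hr (τ r)) hAB]
  refine (enorm_integral_le_lintegral_enorm _).trans ?_
  rw [← lintegral_const_mul' _ _ ENNReal.ofReal_ne_top]
  refine setLIntegral_mono' measurableSet_Ioi fun ρ (hρ : 0 < ρ) ↦ ?_
  have hfactor : sphereKernel e (r * ρ) * (Complex.exp (Complex.I * (τ r * ρ ^ a : ℝ)) * g ρ) -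
      (A * (osc a 1 τ r ρ * g ρ) + B * (osc a (-1) τ r ρ * g ρ)) =
      (sphereKernel e (r * ρ) - (A * Complex.exp (Complex.I * (r * ρ : ℝ)) +
        B * Complex.exp (-(Complex.I * (r * ρ : ℝ))))) *
        (Complex.exp (Complex.I * (τ r * ρ ^ a : ℝ)) * g ρ) := by
    simp only [osc_eq_exp_mul_exp, Complex.ofReal_one, Complex.ofReal_neg, one_mul, neg_mul]
    ring
  have hmin : 0 ≤ min 1 (r * ρ)⁻¹ := by positivity
  rw [hfactor, enorm_mul, enorm_mul, ← ofReal_norm (Complex.exp _), Complex.norm_exp_I_mul_ofReal,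
    ENNReal.ofReal_one, one_mul, ← mul_assoc, ← ENNReal.ofReal_mul' hmin, ← ofReal_norm]
  gcongr
  exact hD _ (mul_pos hr hρ)

lemma enorm_sq_le_of_enorm_sub_le {A B X Y z : ℂ} {δ : ℝ≥0∞}
    (h : ‖z - (A * X + B * Y)‖ₑ ≤ δ) :
    ‖z‖ₑ ^ 2 ≤ 2 * (2 * (‖A‖ₑ ^ 2 * ‖X‖ₑ ^ 2 + ‖B‖ₑ ^ 2 * ‖Y‖ₑ ^ 2) + δ ^ 2) := by
  have hlead : ‖A * X + B * Y‖ₑ ^ 2 ≤ 2 * (‖A‖ₑ ^ 2 * ‖X‖ₑ ^ 2 + ‖B‖ₑ ^ 2 * ‖Y‖ₑ ^ 2) := by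
    rw [← mul_pow, ← mul_pow, ← enorm_mul, ← enorm_mul]
    exact (pow_le_pow_left' (enorm_add_le _ _) 2).trans (ennreal_add_sq_le _ _)
  calc ‖z‖ₑ ^ 2 = ‖(A * X + B * Y) + (z - (A * X + B * Y))‖ₑ ^ 2 := by rw [add_sub_cancel]
    _ ≤ (‖A * X + B * Y‖ₑ + δ) ^ 2 :=
        pow_le_pow_left' ((enorm_add_le _ _).trans (by gcongr)) 2
    _ ≤ _ := (ennreal_add_sq_le _ _).trans (by gcongr)

lemma exists_lintegral_radialOsc_le (ha : 0 < a) (ha1 : a < 1) {s : ℝ} (hs : a / 4 < s)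
    (he : ‖e‖ = 1) :
    ∃ C : ℝ≥0, ∀ τ : ℝ → ℝ, Measurable τ → (∀ r, |τ r| ≤ 1) →
      ∀ g : ℝ → ℂ, IntegrableOn g (Ioi 0) →
      ∫⁻ r in Ioo (0 : ℝ) 1, ‖radialOsc a e g r (τ r)‖ₑ ^ 2 ≤
        C * ∫⁻ ρ in Ioi (0 : ℝ), ENNReal.ofReal ((1 + ρ ^ 2) ^ s) * ‖g ρ‖ₑ ^ 2 := by
  obtain ⟨C₁, hmain⟩ := exists_lintegral_osc_le ha ha1 hs
  obtain ⟨C₂, herror⟩ := exists_lintegral_error_le (s := s) (by linarith)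
  obtain ⟨A, B, D, hD⟩ := exists_norm_sphereKernel_sub_exp_le he
  refine ⟨2 * (2 * (‖A‖₊ ^ 2 * C₁ + ‖B‖₊ ^ 2 * C₁) + D.toNNReal ^ 2 * C₂),
    fun τ hτ hτ1 g hg ↦ ?_⟩
  set W := ∫⁻ ρ in Ioi (0 : ℝ), ENNReal.ofReal ((1 + ρ ^ 2) ^ s) * ‖g ρ‖ₑ ^ 2
  let X (κ r : ℝ) : ℂ := ∫ ρ in Ioi 0, osc a κ τ r ρ * g ρ
  let Z (r : ℝ) : ℝ≥0∞ := ∫⁻ ρ in Ioi (0 : ℝ), ENNReal.ofReal (min 1 (r * ρ)⁻¹) * ‖g ρ‖ₑ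
  have hX (κ : ℝ) : AEMeasurable (fun r ↦ ‖X κ r‖ₑ ^ 2) (volume.restrict (Ioo 0 1)) :=
    (aemeasurable_integral_osc_mul hτ hg).enorm.pow_const 2
  have := hX 1
  have := hX (-1)
  have hDtop : ENNReal.ofReal D ^ 2 ≠ ∞ := by finiteness
  calc ∫⁻ r in Ioo (0 : ℝ) 1, ‖radialOsc a e g r (τ r)‖ₑ ^ 2
      ≤ ∫⁻ r in Ioo (0 : ℝ) 1, 2 * (2 * (‖A‖ₑ ^ 2 * ‖X 1 r‖ₑ ^ 2 + ‖B‖ₑ ^ 2 * ‖X (-1) r‖ₑ ^ 2) +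
          (ENNReal.ofReal D * Z r) ^ 2) := setLIntegral_mono' measurableSet_Ioo fun r hr ↦
        enorm_sq_le_of_enorm_sub_le (enorm_radialOsc_sub_le he hD hτ hg hr.1)
    _ = 2 * (2 * (‖A‖ₑ ^ 2 * (∫⁻ r in Ioo (0 : ℝ) 1, ‖X 1 r‖ₑ ^ 2) +
          ‖B‖ₑ ^ 2 * ∫⁻ r in Ioo (0 : ℝ) 1, ‖X (-1) r‖ₑ ^ 2) +
          ENNReal.ofReal D ^ 2 * ∫⁻ r in Ioo (0 : ℝ) 1, Z r ^ 2) := by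
        simp only [mul_pow]
        rw [lintegral_const_mul' _ _ (by finiteness), lintegral_add_left' (by fun_prop),
          lintegral_const_mul' _ _ (by finiteness), lintegral_add_left' (by fun_prop),
          lintegral_const_mul' _ _ (by finiteness), lintegral_const_mul' _ _ (by finiteness),
          lintegral_const_mul' _ _ hDtop]
    _ ≤ 2 * (2 * (‖A‖ₑ ^ 2 * (C₁ * W) + ‖B‖ₑ ^ 2 * (C₁ * W)) +
          ENNReal.ofReal D ^ 2 * (C₂ * W)) := by
        gcongr
        · exact hmain 1 abs_one τ hτ hτ1 g hg
        · exact hmain (-1) (by simp) τ hτ hτ1 g hg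
        · exact herror g hg
    _ = _ := by
        rw [ENNReal.ofReal, enorm_eq_nnnorm, enorm_eq_nnnorm]
        push_cast
        ring

lemma iSup_enorm_radialOsc_sq_eq (he : ‖e‖ = 1) (hg : IntegrableOn g (Ioi 0)) {r : ℝ}
    (hr : 0 < r) (T : Set ℝ) [Nonempty T] :
    ⨆ t : T, ‖radialOsc a e g r t‖ₑ ^ 2 =
      ⨆ k, ‖radialOsc a e g r (TopologicalSpace.denseSeq T k)‖ₑ ^ 2 :=
  iSup_eq_iSup_denseSeq ((ENNReal.continuous_pow 2).comp
    ((continuous_radialOsc he hg hr).comp continuous_subtype_val).enorm)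

lemma exists_lintegral_iSup_radialOsc_le (ha : 0 < a) (ha1 : a < 1) {s : ℝ} (hs : a / 4 < s)
    (he : ‖e‖ = 1) :
    ∃ C : ℝ≥0, ∀ g : ℝ → ℂ, Measurable g → IntegrableOn g (Ioi 0) →
      ∫⁻ r in Ioo (0 : ℝ) 1, ⨆ t : Ioo (-1 : ℝ) 1, ‖radialOsc a e g r t‖ₑ ^ 2 ≤
        C * ∫⁻ ρ in Ioi (0 : ℝ), ENNReal.ofReal ((1 + ρ ^ 2) ^ s) * ‖g ρ‖ₑ ^ 2 := by
  obtain ⟨C, hC⟩ := exists_lintegral_radialOsc_le ha ha1 hs he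
  refine ⟨C, fun g hg hgi ↦ ?_⟩
  have : Nonempty (Ioo (-1 : ℝ) 1) := ⟨0, by norm_num⟩
  rw [setLIntegral_congr_fun measurableSet_Ioo
    fun r hr ↦ iSup_enorm_radialOsc_sq_eq he hgi hr.1 (Ioo (-1) 1)]
  refine lintegral_iSup_le_of_forall_measurable
    (Ψ := fun r (t : Ioo (-1 : ℝ) 1) ↦ ‖radialOsc a e g r t‖ₑ ^ 2)
    (fun k ↦ (measurable_radialOsc a e hg _).enorm.pow_const 2) fun τ hτ ↦ ?_
  exact hC (fun r ↦ τ r) (by fun_prop) (fun r ↦ (abs_lt.2 (τ r).2).le) g hgi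

end RadialOsc

/-! ### The maximal estimate for radial functions -/

lemma enorm_iSup_norm_sq_le {ι E : Type*} [SeminormedAddCommGroup E] (F : ι → E) :
    ‖(⨆ i, ‖F i‖) ^ 2‖ₑ ≤ ⨆ i, ‖F i‖ₑ ^ 2 := by
  by_cases htop : ⨆ i, ‖F i‖ₑ ^ 2 = ∞
  · exact htop ▸ le_top
  rw [Real.enorm_of_nonneg (sq_nonneg _)]
  have hsup : ⨆ i, ‖F i‖ ≤ √(⨆ i, ‖F i‖ₑ ^ 2).toReal := by
    refine Real.iSup_le (fun i ↦ le_sqrt_of_sq_le ?_) (sqrt_nonneg _)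
    rw [← toReal_enorm, ← ENNReal.toReal_pow]
    exact ENNReal.toReal_mono htop (le_iSup (fun i ↦ ‖F i‖ₑ ^ 2) i)
  exact ENNReal.ofReal_le_of_le_toReal
    ((le_sqrt (Real.iSup_nonneg fun i ↦ norm_nonneg _) ENNReal.toReal_nonneg).1 hsup)

section Maximal

open Set Metric
open scoped NNReal

section Polar

variable {E : Type*} [NormedAddCommGroup E] [InnerProductSpace ℝ E] [FiniteDimensional ℝ E]
  [MeasurableSpace E] [BorelSpace E] [Nontrivial E] {e : E}

lemma lintegral_rpow_mul_sq_enorm_eq_radialProfile (he : ‖e‖ = 1) {G : E → ℂ} (hG : Continuous G)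
    (hrad : ∀ ξ η : E, ‖ξ‖ = ‖η‖ → G ξ = G η) (s : ℝ) :
    ∫⁻ ξ, ENNReal.ofReal ((1 + ‖ξ‖ ^ 2) ^ s) * ‖G ξ‖ₑ ^ 2 =
      (volume : Measure E).toSphere univ *
        ∫⁻ ρ in Ioi (0 : ℝ), ENNReal.ofReal ((1 + ρ ^ 2) ^ s) * ‖radialProfile e G ρ‖ₑ ^ 2 := by
  have hray (ξ : E) : G ξ = G (‖ξ‖ • e) := hrad _ _ (by rw [norm_smul, norm_norm, he, mul_one])
  have hm : Measurable fun ρ : ℝ ↦ ENNReal.ofReal ((1 + ρ ^ 2) ^ s) * ‖G (ρ • e)‖ₑ ^ 2 := by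
    have : Measurable fun ρ : ℝ ↦ G (ρ • e) := Continuous.measurable (by fun_prop)
    exact Measurable.mul (by fun_prop) (this.enorm.pow_const 2)
  calc ∫⁻ ξ, ENNReal.ofReal ((1 + ‖ξ‖ ^ 2) ^ s) * ‖G ξ‖ₑ ^ 2
      = ∫⁻ ξ, ENNReal.ofReal ((1 + ‖ξ‖ ^ 2) ^ s) * ‖G (‖ξ‖ • e)‖ₑ ^ 2 :=
        lintegral_congr fun ξ ↦ by rw [← hray ξ]
    _ = _ := by
        rw [lintegral_fun_norm_eq_mul_lintegral volume hm]
        refine congrArg _ (setLIntegral_congr_fun measurableSet_Ioi fun ρ (hρ : 0 < ρ) ↦ ?_)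
        have hpow : 0 ≤ ρ ^ (((Module.finrank ℝ E : ℝ) - 1) / 2) := by positivity
        rw [radialProfile, enorm_mul, mul_pow, ← ofReal_norm (Complex.ofReal _), Complex.norm_real,
          norm_of_nonneg hpow, ← ENNReal.ofReal_pow hpow, rpow_half_finrank_sub_one_sq hρ.le,
          mul_left_comm]

end Polar

variable {n : ℕ} {a : ℝ} {f : EuclideanSpace ℝ (Fin n) → ℂ} {e : EuclideanSpace ℝ (Fin n)}

lemma Sosc_eq_radialOsc (he : ‖e‖ = 1) (hf : Integrable (FT n f))
    (hrad : ∀ x y : EuclideanSpace ℝ (Fin n), ‖x‖ = ‖y‖ → f x = f y)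
    {x : EuclideanSpace ℝ (Fin n)} (hx : x ≠ 0) (t : ℝ) :
    Sosc n a f x t = (((2 * π) ^ n)⁻¹ *
      (‖x‖ ^ (((Module.finrank ℝ (EuclideanSpace ℝ (Fin n)) : ℝ) - 1) / 2))⁻¹ : ℝ) *
        radialOsc a e (radialProfile e (FT n f)) ‖x‖ t := by
  let H (ξ : EuclideanSpace ℝ (Fin n)) : ℂ :=
    Complex.exp (Complex.I * (t * ‖ξ‖ ^ a : ℝ)) * FT n f ξ
  have hH : Integrable H := hf.bdd_mul (c := 1)
    (Measurable.aestronglyMeasurable (by fun_prop))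
    (.of_forall fun ξ ↦ (Complex.norm_exp_I_mul_ofReal _).le)
  have hHrad : ∀ ξ η, ‖ξ‖ = ‖η‖ → H ξ = H η := fun ξ η h ↦ by
    simp only [H, h, FT_eq_of_norm_eq hrad h]
  have hphase (ξ : EuclideanSpace ℝ (Fin n)) :
      Complex.exp (Complex.I * (⟪x, ξ⟫_ℝ + t * ‖ξ‖ ^ a : ℝ)) * FT n f ξ =
        Complex.exp (Complex.I * ⟪x, ξ⟫_ℝ) * H ξ := by
    rw [Complex.ofReal_add, mul_add, Complex.exp_add, mul_assoc]
  have hprofile : ∀ ρ ∈ Ioi (0 : ℝ), sphereKernel e (‖x‖ * ρ) * radialProfile e H ρ =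
      sphereKernel e (‖x‖ * ρ) *
        (Complex.exp (Complex.I * (t * ρ ^ a : ℝ)) * radialProfile e (FT n f) ρ) := by
    intro ρ (hρ : 0 < ρ)
    simp only [radialProfile, H, norm_smul, he, mul_one, norm_of_nonneg hρ.le]
    ring
  simp only [Sosc, hphase]
  rw [integral_exp_inner_mul_of_radial he hH hHrad hx,
    setIntegral_congr_fun measurableSet_Ioi hprofile, radialOsc, ← mul_assoc]
  push_cast
  rfl

lemma setLIntegral_ball_iSup_Sosc_eq (he : ‖e‖ = 1)
    (hrad : ∀ x y : EuclideanSpace ℝ (Fin n), ‖x‖ = ‖y‖ → f x = f y)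
    {G : SchwartzMap (EuclideanSpace ℝ (Fin n)) ℂ} (hG : FT n f = G) :
    ∫⁻ x in ball (0 : EuclideanSpace ℝ (Fin n)) 1, ⨆ t : Ioo (-1 : ℝ) 1, ‖Sosc n a f x t‖ₑ ^ 2 =
      (volume : Measure (EuclideanSpace ℝ (Fin n))).toSphere univ *
        (ENNReal.ofReal ((2 * π) ^ n)⁻¹ ^ 2 * ∫⁻ r in Ioo (0 : ℝ) 1,
          ⨆ t : Ioo (-1 : ℝ) 1, ‖radialOsc a e (radialProfile e G) r t‖ₑ ^ 2) := by
  have : Nontrivial (EuclideanSpace ℝ (Fin n)) := ⟨e, 0, norm_ne_zero_iff.1 (he ▸ one_ne_zero)⟩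
  have : Nonempty (Ioo (-1 : ℝ) 1) := ⟨0, by norm_num⟩
  set g := radialProfile e G
  have hgi : IntegrableOn g (Ioi 0) := integrableOn_radialProfile he G
  have hgm : Measurable g := (continuous_radialProfile e G.continuous).measurable
  set p := ((Module.finrank ℝ (EuclideanSpace ℝ (Fin n)) : ℝ) - 1) / 2 with hp
  let c (ρ : ℝ) : ℝ≥0∞ := ENNReal.ofReal (((2 * π) ^ n)⁻¹ * (ρ ^ p)⁻¹) ^ 2
  let u (ρ : ℝ) : ℝ≥0∞ :=
    ⨆ k, ‖radialOsc a e g ρ (TopologicalSpace.denseSeq (Ioo (-1 : ℝ) 1) k)‖ₑ ^ 2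
  have hu : Measurable u := .iSup fun k ↦ (measurable_radialOsc a e hgm _).enorm.pow_const 2
  have hsup {r : ℝ} (hr : 0 < r) : ⨆ t : Ioo (-1 : ℝ) 1, ‖radialOsc a e g r t‖ₑ ^ 2 = u r :=
    iSup_enorm_radialOsc_sq_eq he hgi hr _
  have hSosc {x : EuclideanSpace ℝ (Fin n)} (hx : x ≠ 0) :
      ⨆ t : Ioo (-1 : ℝ) 1, ‖Sosc n a f x t‖ₑ ^ 2 = c ‖x‖ * u ‖x‖ := by
    rw [← hsup (norm_pos_iff.2 hx), ENNReal.mul_iSup]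
    refine iSup_congr fun t ↦ ?_
    rw [Sosc_eq_radialOsc he (hG ▸ G.integrable) hrad hx, hG, enorm_mul, mul_pow,
      ← ofReal_norm (Complex.ofReal _), Complex.norm_real, norm_of_nonneg (by positivity)]
  have hjac : ∀ ρ ∈ Ioo (0 : ℝ) 1, ENNReal.ofReal
      (ρ ^ (Module.finrank ℝ (EuclideanSpace ℝ (Fin n)) - 1)) * (c ρ * u ρ) =
        ENNReal.ofReal ((2 * π) ^ n)⁻¹ ^ 2 *
          ⨆ t : Ioo (-1 : ℝ) 1, ‖radialOsc a e g ρ t‖ₑ ^ 2 := by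
    intro ρ hρ
    have hρp : 0 < ρ ^ p := rpow_pos_of_pos hρ.1 p
    rw [hsup hρ.1, ← mul_assoc, ← rpow_half_finrank_sub_one_sq hρ.1.le, ← hp,
      ENNReal.ofReal_pow hρp.le, ← mul_pow, ← ENNReal.ofReal_mul hρp.le, mul_left_comm,
      mul_inv_cancel₀ hρp.ne', mul_one]
  calc _ = ∫⁻ x in ball (0 : EuclideanSpace ℝ (Fin n)) 1, c ‖x‖ * u ‖x‖ :=
        lintegral_congr_ae ((ae_restrict_of_ae (Measure.ae_ne volume 0)).mono fun x ↦ hSosc)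
    _ = _ := by
        rw [setLIntegral_ball_fun_norm_eq_mul_lintegral volume (h := fun ρ ↦ c ρ * u ρ)
          (by fun_prop), setLIntegral_congr_fun measurableSet_Ioo hjac,
          lintegral_const_mul' _ _ (by finiteness)]

lemma exists_setLIntegral_ball_iSup_Sosc_le (ha : 0 < a) (ha1 : a < 1) (hn : 1 ≤ n) {s : ℝ}
    (hs : a / 4 < s) :
    ∃ C : ℝ≥0, ∀ f : SchwartzMap (EuclideanSpace ℝ (Fin n)) ℂ,
      (∀ x y : EuclideanSpace ℝ (Fin n), ‖x‖ = ‖y‖ → f x = f y) →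
      ∫⁻ x in ball (0 : EuclideanSpace ℝ (Fin n)) 1,
          ⨆ t : Ioo (-1 : ℝ) 1, ‖Sosc n a f x t‖ₑ ^ 2 ≤
        C * ∫⁻ ξ, ENNReal.ofReal ((1 + ‖ξ‖ ^ 2) ^ s) * ‖FT n f ξ‖ₑ ^ 2 := by
  let e : EuclideanSpace ℝ (Fin n) := EuclideanSpace.single ⟨0, hn⟩ 1
  have he : ‖e‖ = 1 := by rw [PiLp.norm_single, norm_one]
  have : Nontrivial (EuclideanSpace ℝ (Fin n)) := ⟨e, 0, norm_ne_zero_iff.1 (he ▸ one_ne_zero)⟩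
  obtain ⟨C, hC⟩ := exists_lintegral_iSup_radialOsc_le ha ha1 hs he
  refine ⟨(((2 * π) ^ n)⁻¹).toNNReal ^ 2 * C, fun f hrad ↦ ?_⟩
  obtain ⟨G, hG⟩ := exists_schwartzMap_eq_FT f
  have hGrad : ∀ ξ η, ‖ξ‖ = ‖η‖ → G ξ = G η := fun ξ η h ↦ hG ▸ FT_eq_of_norm_eq hrad h
  rw [setLIntegral_ball_iSup_Sosc_eq he hrad hG, hG,
    lintegral_rpow_mul_sq_enorm_eq_radialProfile he G.continuous hGrad]
  set g := radialProfile e G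
  have hg : Measurable g := (continuous_radialProfile e G.continuous).measurable
  refine (mul_le_mul_right (mul_le_mul_right
    (hC g hg (integrableOn_radialProfile he G)) _) _).trans_eq ?_
  rw [ENNReal.ofReal]
  push_cast
  ring

theorem stmt6_general (a : ℝ) (ha : 0 < a) (ha1 : a < 1) (n : ℕ) (hn : 1 ≤ n) (s : ℝ)
    (hs : a / 4 < s) :
    ∃ C > 0, ∀ f : SchwartzMap (EuclideanSpace ℝ (Fin n)) ℂ,
      (∀ x y : EuclideanSpace ℝ (Fin n), ‖x‖ = ‖y‖ → f x = f y) →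
      (∫ x in Metric.ball (0 : EuclideanSpace ℝ (Fin n)) 1,
          (⨆ t : Set.Ioo (-1 : ℝ) 1, ‖Sosc n a f x t‖) ^ 2) ^ (1/2 : ℝ)
        ≤ C * (∫ ξ, (1 + ‖ξ‖ ^ 2) ^ s * ‖FT n f ξ‖ ^ 2) ^ (1/2 : ℝ) := by
  obtain ⟨C, hC⟩ := exists_setLIntegral_ball_iSup_Sosc_le ha ha1 hn hs
  refine ⟨((C : ℝ) + 1) ^ (1 / 2 : ℝ), by positivity, fun f hrad ↦ ?_⟩
  obtain ⟨G, hG⟩ := exists_schwartzMap_eq_FT f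
  have hweight : ∫⁻ ξ, ENNReal.ofReal ((1 + ‖ξ‖ ^ 2) ^ s) * ‖FT n f ξ‖ₑ ^ 2 =
      ENNReal.ofReal (∫ ξ, (1 + ‖ξ‖ ^ 2) ^ s * ‖FT n f ξ‖ ^ 2) := by
    rw [hG, ofReal_integral_eq_lintegral_ofReal (integrable_rpow_mul_sq_norm_schwartzMap G s)
      (.of_forall fun ξ ↦ by positivity)]
    refine lintegral_congr fun ξ ↦ ?_
    rw [ENNReal.ofReal_mul (by positivity), ENNReal.ofReal_pow (norm_nonneg _), ofReal_norm]
  set W := ∫ ξ, (1 + ‖ξ‖ ^ 2) ^ s * ‖FT n f ξ‖ ^ 2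
  have hW : 0 ≤ W := integral_nonneg fun ξ ↦ by positivity
  have hsq : ∫ x in ball (0 : EuclideanSpace ℝ (Fin n)) 1,
      (⨆ t : Ioo (-1 : ℝ) 1, ‖Sosc n a f x t‖) ^ 2 ≤ (C + 1) * W := by
    rw [← ENNReal.ofReal_le_ofReal_iff (by positivity)]
    calc _ ≤ ∫⁻ x in ball (0 : EuclideanSpace ℝ (Fin n)) 1,
          ⨆ t : Ioo (-1 : ℝ) 1, ‖Sosc n a f x t‖ₑ ^ 2 :=
          (ofReal_le_enorm _).trans ((enorm_integral_le_lintegral_enorm _).trans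
            (lintegral_mono fun x ↦ enorm_iSup_norm_sq_le _))
      _ ≤ C * ENNReal.ofReal W := hweight ▸ hC f hrad
      _ ≤ ENNReal.ofReal ((C + 1) * W) := by
          rw [← ENNReal.ofReal_coe_nnreal, ← ENNReal.ofReal_mul C.coe_nonneg]
          gcongr
          exact le_add_of_nonneg_right zero_le_one
  rw [← mul_rpow (by positivity) hW]
  exact rpow_le_rpow (integral_nonneg fun x ↦ by positivity) hsq (by norm_num)

end Maximal

theorem stmt6 (a : ℝ) (ha : 0 < a) (ha1 : a < 1) (n : ℕ) (hn : 2 ≤ n)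
    (s : ℝ) (hs : a / 4 < s) :
    ∃ C > 0, ∀ f : EuclideanSpace ℝ (Fin n) → ℂ,
      ContDiff ℝ (⊤ : ℕ∞) f → HasCompactSupport f → 0 ∉ tsupport f →
      (∀ x y : EuclideanSpace ℝ (Fin n), ‖x‖ = ‖y‖ → f x = f y) →
      (∫ x in Metric.ball (0 : EuclideanSpace ℝ (Fin n)) 1,
          (⨆ t : Set.Ioo (-1 : ℝ) 1, ‖Sosc n a f x t‖) ^ 2) ^ (1/2 : ℝ)
        ≤ C * (∫ ξ, (1 + ‖ξ‖ ^ 2) ^ s * ‖FT n f ξ‖ ^ 2) ^ (1/2 : ℝ) := by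
  obtain ⟨C, hC, hle⟩ := stmt6_general a ha ha1 n (by omega) s hs
  exact ⟨C, hC, fun f hf hc _ hrad ↦ hle (hc.toSchwartzMap hf) hrad⟩
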